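/- arXiv:2303.03345 — 6 statements merged into one kernel-verified Lean document; each statement's English description precedes it below -/
import Mathlib

section
/- With notation as in the auxiliary polynomial construction, for every positive integer d every coefficient of the polynomial h(r_d + d·x) ∈ ℤ[x] is divisible by λ(d); equivalently, h_d(x) = h(r_d + d·x)/λ(d) is a polynomial with integer coefficients. -/
/-!
Since `λ(d)` is the product over `p ∣ d` of the pairwise coprime factors `λ(p) ^ v_p(d)`, it
suffices to divide by each of them, and divisibility by a power of `p` may be tested in `ℤ_p[x]`.
There `h` is a multiple of `(x - z_p) ^ m_p`, and substituting `r_d + d x` turns `x - z_p` into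
`(r_d - z_p) + d x`, all of whose coefficients are divisible by `p ^ v_p(d)`.
-/

open Polynomial

section Substitution

variable {R : Type*} [CommRing R] {a z r d : R}

theorem C_dvd_X_sub_C_comp_C_add_C_mul_X (hr : a ∣ z - r) (hd : a ∣ d) :
    C a ∣ (X - C z).comp (C r + C d * X) := by
  have hcomp : (X - C z).comp (C r + C d * X) = C d * X - C (z - r) := by
    simp only [sub_comp, X_comp, C_comp, C_sub]
    ring
  rw [hcomp]
  exact ((map_dvd C hd).mul_right X).sub (map_dvd C hr)

theorem C_pow_rootMultiplicity_dvd_comp_C_add_C_mul_X (f : R[X]) (hr : a ∣ z - r) (hd : a ∣ d) :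
    C (a ^ f.rootMultiplicity z) ∣ f.comp (C r + C d * X) := by
  calc C (a ^ f.rootMultiplicity z) = C a ^ f.rootMultiplicity z := C_pow
    _ ∣ (X - C z).comp (C r + C d * X) ^ f.rootMultiplicity z :=
      pow_dvd_pow_of_dvd (C_dvd_X_sub_C_comp_C_add_C_mul_X hr hd) _
    _ = ((X - C z) ^ f.rootMultiplicity z).comp (C r + C d * X) := (pow_comp _ _ _).symm
    _ ∣ f.comp (C r + C d * X) := by
      simpa only [coe_compRingHom_apply] using
        map_dvd (compRingHom (C r + C d * X)) (pow_rootMultiplicity_dvd f z)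

end Substitution

theorem C_prime_pow_dvd_map_padicInt_iff {p : ℕ} [Fact p.Prime] {n : ℕ} {f : ℤ[X]} :
    C ((p : ℤ_[p]) ^ n) ∣ f.map (algebraMap ℤ ℤ_[p]) ↔ C ((p : ℤ) ^ n) ∣ f := by
  simp only [C_dvd_iff_dvd_coeff, coeff_map, eq_intCast (algebraMap ℤ ℤ_[p]),
    PadicInt.pow_p_dvd_int_iff]

theorem C_prime_pow_rootMultiplicity_dvd_comp {p : ℕ} [Fact p.Prime] (h : ℤ[X]) {z : ℤ_[p]}
    {r d : ℤ} {n : ℕ} (hr : (p : ℤ_[p]) ^ n ∣ z - r) (hd : (p : ℤ) ^ n ∣ d) :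
    C (((p : ℤ) ^ (h.map (algebraMap ℤ ℤ_[p])).rootMultiplicity z) ^ n) ∣
      h.comp (C r + C d * X) := by
  have hd' : (p : ℤ_[p]) ^ n ∣ (d : ℤ_[p]) := (PadicInt.pow_p_dvd_int_iff n d).mpr hd
  have hpadic := C_pow_rootMultiplicity_dvd_comp_C_add_C_mul_X (h.map (algebraMap ℤ ℤ_[p])) hr hd'
  rw [pow_right_comm, ← pow_mul, ← C_prime_pow_dvd_map_padicInt_iff, pow_mul]
  simpa only [map_comp, Polynomial.map_add, Polynomial.map_mul, map_C, map_X,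
    eq_intCast (algebraMap ℤ ℤ_[p])] using hpadic

theorem monoidHom_apply_dvd_of_forall_prime_pow_dvd {R : Type*} [CommSemiring R] (f : ℕ →* R)
    (hcoprime : ∀ p q : ℕ, p.Prime → q.Prime → p ≠ q → IsCoprime (f p) (f q))
    {d : ℕ} (hd : d ≠ 0) {x : R} (hx : ∀ p : ℕ, p.Prime → f p ^ d.factorization p ∣ x) :
    f d ∣ x := by
  have hfd : f d = ∏ p ∈ d.primeFactors, f p ^ d.factorization p := by
    conv_lhs => rw [← Nat.prod_factorization_pow_eq_self hd]
    simp only [Finsupp.prod, map_prod, map_pow, Nat.support_factorization]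
  rw [hfd]
  refine Finset.prod_dvd_of_coprime (fun p hp q hq hpq => ?_)
    fun p hp => hx p (Nat.prime_of_mem_primeFactors hp)
  exact (hcoprime p q (Nat.prime_of_mem_primeFactors hp) (Nat.prime_of_mem_primeFactors hq)
    hpq).pow

theorem C_completelyMultiplicative_dvd_comp (h : ℤ[X]) (z : ∀ (p : ℕ) [Fact p.Prime], ℤ_[p])
    (lam : ℕ →* ℕ)
    (hlam : ∀ (p : ℕ) [Fact p.Prime],
      lam p = p ^ (h.map (algebraMap ℤ ℤ_[p])).rootMultiplicity (z p))
    {d : ℕ} (hd : d ≠ 0) {r : ℤ}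
    (hr : ∀ (p : ℕ) [Fact p.Prime], (p : ℤ_[p]) ^ d.factorization p ∣ z p - r) :
    C (lam d : ℤ) ∣ h.comp (C r + C (d : ℤ) * X) := by
  let castPoly : ℕ →+* ℤ[X] := C.comp (Nat.castRingHom ℤ)
  refine monoidHom_apply_dvd_of_forall_prime_pow_dvd ((castPoly : ℕ →* ℤ[X]).comp lam)
    (fun p q hp hq hpq => ?_) hd fun p hp => ?_
  · have : Fact p.Prime := ⟨hp⟩
    have : Fact q.Prime := ⟨hq⟩
    have hcoprime : (lam p).Coprime (lam q) := by
      rw [hlam p, hlam q]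
      exact ((Nat.coprime_primes hp hq).mpr hpq).pow _ _
    exact hcoprime.isCoprime.map C
  · have : Fact p.Prime := ⟨hp⟩
    have hpd : (p : ℤ) ^ d.factorization p ∣ d := by exact_mod_cast Nat.ordProj_dvd d p
    have hlamC : castPoly (lam p) =
        C ((p : ℤ) ^ (h.map (algebraMap ℤ ℤ_[p])).rootMultiplicity (z p)) := by
      simp [castPoly, hlam p]
    rw [MonoidHom.comp_apply, MonoidHom.coe_coe, hlamC, ← C_pow]
    exact C_prime_pow_rootMultiplicity_dvd_comp h (hr p) hpd

/-- The auxiliary polynomials have integer coefficients: `λ(d)` divides every coefficient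
of `h(r_d + d·x)`, i.e. `h_d(x) = h(r_d + d·x)/λ(d) ∈ ℤ[x]`. -/
theorem stmt2
    (k : ℕ) (hk : 0 < k)
    (h : Polynomial ℤ) (hdeg : h.natDegree = k) (hlead : 0 < h.leadingCoeff)
    (hint : ∀ q : ℕ, 0 < q → ∃ n : ℤ, (q : ℤ) ∣ h.eval n)
    (z : ∀ (p : ℕ) [Fact p.Prime], ℤ_[p])
    (hz : ∀ (p : ℕ) [Fact p.Prime], Polynomial.aeval (z p) h = 0)
    (lam : ℕ → ℕ) (hlam1 : lam 1 = 1)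
    (hlamMul : ∀ a b : ℕ, lam (a * b) = lam a * lam b)
    (hlamP : ∀ (p : ℕ) [Fact p.Prime],
      lam p = p ^ Polynomial.rootMultiplicity (z p) (h.map (algebraMap ℤ ℤ_[p])))
    (r : ℕ → ℤ)
    (hr : ∀ d : ℕ, 0 < d → -(d : ℤ) < r d ∧ r d ≤ 0)
    (hrz : ∀ d : ℕ, 0 < d → ∀ (p : ℕ) [Fact p.Prime], ∀ α : ℕ, p ^ α ∣ d →
      (p : ℤ_[p]) ^ α ∣ (z p - (r d : ℤ_[p])))
    :
    ∀ d : ℕ, 0 < d →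
      (∀ i : ℕ, (lam d : ℤ) ∣
        (h.comp (Polynomial.C (r d) + Polynomial.C (d : ℤ) * Polynomial.X)).coeff i) ∧
      ∃ H : Polynomial ℤ, Polynomial.C (lam d : ℤ) * H =
        h.comp (Polynomial.C (r d) + Polynomial.C (d : ℤ) * Polynomial.X) := by
  intro d hd
  let lamHom : ℕ →* ℕ := { toFun := lam, map_one' := hlam1, map_mul' := hlamMul }
  have hdvd : C (lam d : ℤ) ∣ h.comp (C (r d) + C (d : ℤ) * X) :=
    C_completelyMultiplicative_dvd_comp h z lamHom hlamP hd.ne'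
      fun p _ => hrz d hd p _ (Nat.ordProj_dvd d p)
  exact ⟨(C_dvd_iff_dvd_coeff _ _).mp hdvd, hdvd.imp fun _ hH => hH.symm⟩
end

section
/- For all positive integers d and q one has λ(q)·h_{dq}(ℕ) ⊆ h_d(ℕ); that is, for every positive integer n there exists a positive integer n' with λ(q)·h_{dq}(n) = h_d(n'). -/
/-!
Both `r_d` and `r_{dq}` approximate the same point `(z_p)_p` modulo `d`, so `r_{dq} = r_d + d t` for
some integer `t`. Substituting, `r_{dq} + d q x = r_d + d (t + q x)`, which gives the polynomial
identity `λ(q) h_{dq}(x) = h_d(t + q x)` after cancelling `λ(d)`. The normalisation `-d < r_d ≤ 0`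
forces `t > -q`, so `t + q n` is positive for every `n ≥ 1`.
-/

open Polynomial

theorem natCast_dvd_int_of_forall_padicInt_pow_dvd {d : ℕ} {a : ℤ}
    (hlocal : ∀ (p : ℕ) [Fact p.Prime], ∀ α : ℕ, p ^ α ∣ d → (p : ℤ_[p]) ^ α ∣ (a : ℤ_[p])) :
    (d : ℤ) ∣ a := by
  rw [Int.natCast_dvd, Nat.dvd_iff_prime_pow_dvd_dvd]
  intro p α hp hpd
  have : Fact p.Prime := ⟨hp⟩
  rw [← Int.natCast_dvd, Nat.cast_pow, ← PadicInt.pow_p_dvd_int_iff]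
  exact hlocal p α hpd

/-- The integer `r` represents the profinite integer `(z_p)_p` modulo `d`: it is congruent to `z_p`
modulo every power of `p` dividing `d`, for every prime `p`. -/
def IsResidueMod (z : ∀ (p : ℕ) [Fact p.Prime], ℤ_[p]) (d : ℕ) (r : ℤ) : Prop :=
  ∀ (p : ℕ) [Fact p.Prime], ∀ α : ℕ, p ^ α ∣ d → (p : ℤ_[p]) ^ α ∣ (z p - (r : ℤ_[p]))

namespace IsResidueMod

variable {z : ∀ (p : ℕ) [Fact p.Prime], ℤ_[p]} {d e : ℕ} {r s : ℤ}

theorem of_dvd (hs : IsResidueMod z e s) (hde : d ∣ e) : IsResidueMod z d s :=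
  fun p _ α hpd => hs p α (hpd.trans hde)

theorem dvd_sub (hr : IsResidueMod z d r) (hs : IsResidueMod z d s) : (d : ℤ) ∣ s - r := by
  refine natCast_dvd_int_of_forall_padicInt_pow_dvd fun p _ α hpd => ?_
  simpa only [Int.cast_sub, sub_sub_sub_cancel_left] using
    _root_.dvd_sub (hr p α hpd) (hs p α hpd)

end IsResidueMod

theorem ne_zero_of_map_mul_of_map_prime_ne_zero {M : Type*} [MulZeroClass M] [NoZeroDivisors M]
    {f : ℕ → M} (hone : f 1 ≠ 0) (hmul : ∀ a b : ℕ, f (a * b) = f a * f b)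
    (hprime : ∀ p : ℕ, p.Prime → f p ≠ 0) {n : ℕ} (hn : n ≠ 0) : f n ≠ 0 := by
  induction n using Nat.recOnMul with
  | zero => exact absurd rfl hn
  | one => exact hone
  | prime p hp => exact hprime p hp
  | mul a b iha ihb =>
    rw [hmul]
    exact mul_ne_zero (iha (left_ne_zero_of_mul hn)) (ihb (right_ne_zero_of_mul hn))

theorem C_mul_eq_comp_of_C_mul_eq_comp {R : Type*} [CommRing R] [NoZeroDivisors R]
    {h F G : R[X]} {a b d q r s t : R} (ha : a ≠ 0) (hst : s = r + d * t)
    (hF : C a * F = h.comp (C r + C d * X)) (hG : C (a * b) * G = h.comp (C s + C (d * q) * X)) :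
    C b * G = F.comp (C t + C q * X) := by
  have hsubst : C s + C (d * q) * X = (C r + C d * X).comp (C t + C q * X) := by
    simp only [hst, C_add, C_mul, add_comp, mul_comp, C_comp, X_comp]
    ring
  refine mul_left_cancel₀ (C_ne_zero.2 ha) ?_
  calc C a * (C b * G) = h.comp (C s + C (d * q) * X) := by rw [← mul_assoc, ← C_mul, hG]
    _ = (h.comp (C r + C d * X)).comp (C t + C q * X) := by rw [hsubst, comp_assoc]
    _ = C a * F.comp (C t + C q * X) := by rw [← hF, mul_comp, C_comp]

theorem add_mul_pos_of_neg_mul_lt {R : Type*} [CommRing R] [LinearOrder R] [IsStrictOrderedRing R]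
    {d q r s t x : R} (hd : 0 < d) (hq : 0 ≤ q) (hr : r ≤ 0) (hs : -(d * q) < s)
    (hst : s = r + d * t) (hx : 1 ≤ x) : 0 < t + q * x := by
  have hqt : 0 < t + q := by
    refine pos_of_mul_pos_right (a := d) ?_ hd.le
    linarith
  linarith [le_mul_of_one_le_right hq hx]

theorem stmt3_general {h : ℤ[X]} {z : ∀ (p : ℕ) [Fact p.Prime], ℤ_[p]} {lam : ℕ → ℕ}
    (hlam : ∀ d : ℕ, 0 < d → lam d ≠ 0) (hlamMul : ∀ a b : ℕ, lam (a * b) = lam a * lam b)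
    {r : ℕ → ℤ} (hr : ∀ d : ℕ, 0 < d → -(d : ℤ) < r d ∧ r d ≤ 0)
    (hrz : ∀ d : ℕ, 0 < d → IsResidueMod z d (r d)) {H : ℕ → ℤ[X]}
    (hH : ∀ d : ℕ, 0 < d → C (lam d : ℤ) * H d = h.comp (C (r d) + C (d : ℤ) * X))
    {d q n : ℕ} (hd : 0 < d) (hq : 0 < q) (hn : 0 < n) :
    ∃ m : ℕ, 0 < m ∧ (lam q : ℤ) * (H (d * q)).eval (n : ℤ) = (H d).eval (m : ℤ) := by
  have hdq : 0 < d * q := Nat.mul_pos hd hq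
  obtain ⟨t, ht⟩ : (d : ℤ) ∣ r (d * q) - r d :=
    (hrz d hd).dvd_sub ((hrz (d * q) hdq).of_dvd (Nat.dvd_mul_right d q))
  have hst : r (d * q) = r d + d * t := eq_add_of_sub_eq' ht
  have hpos : 0 < t + q * n :=
    add_mul_pos_of_neg_mul_lt (by exact_mod_cast hd) (Nat.cast_nonneg q) (hr d hd).2
      (by exact_mod_cast (hr (d * q) hdq).1) hst (by exact_mod_cast hn)
  have hcomp : C (lam q : ℤ) * H (d * q) = (H d).comp (C t + C (q : ℤ) * X) :=
    C_mul_eq_comp_of_C_mul_eq_comp (Nat.cast_ne_zero.2 (hlam d hd)) hst (hH d hd)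
      (by simpa only [hlamMul, Nat.cast_mul] using hH (d * q) hdq)
  lift t + q * n to ℕ using hpos.le with m hm
  refine ⟨m, by exact_mod_cast hpos, ?_⟩
  simpa only [eval_mul, eval_comp, eval_add, eval_C, eval_X, hm] using congrArg (eval (n : ℤ)) hcomp

/-- Proposition 3.2: `λ(q)·h_{dq}(ℕ) ⊆ h_d(ℕ)` for all positive integers `d, q`. -/
theorem stmt3
    (k : ℕ) (hk : 0 < k)
    (h : Polynomial ℤ) (hdeg : h.natDegree = k) (hlead : 0 < h.leadingCoeff)
    (hint : ∀ q : ℕ, 0 < q → ∃ n : ℤ, (q : ℤ) ∣ h.eval n)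
    (z : ∀ (p : ℕ) [Fact p.Prime], ℤ_[p])
    (hz : ∀ (p : ℕ) [Fact p.Prime], Polynomial.aeval (z p) h = 0)
    (lam : ℕ → ℕ) (hlam1 : lam 1 = 1)
    (hlamMul : ∀ a b : ℕ, lam (a * b) = lam a * lam b)
    (hlamP : ∀ (p : ℕ) [Fact p.Prime],
      lam p = p ^ Polynomial.rootMultiplicity (z p) (h.map (algebraMap ℤ ℤ_[p])))
    (r : ℕ → ℤ)
    (hr : ∀ d : ℕ, 0 < d → -(d : ℤ) < r d ∧ r d ≤ 0)
    (hrz : ∀ d : ℕ, 0 < d → ∀ (p : ℕ) [Fact p.Prime], ∀ α : ℕ, p ^ α ∣ d →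
      (p : ℤ_[p]) ^ α ∣ (z p - (r d : ℤ_[p])))
    (H : ℕ → Polynomial ℤ)
    (hH : ∀ d : ℕ, 0 < d →
      Polynomial.C (lam d : ℤ) * H d =
        h.comp (Polynomial.C (r d) + Polynomial.C (d : ℤ) * Polynomial.X))
    :
    ∀ d q : ℕ, 0 < d → 0 < q → ∀ n : ℕ, 0 < n →
      ∃ nn : ℕ, 0 < nn ∧
        (lam q : ℤ) * (H (d * q)).eval (n : ℤ) = (H d).eval (nn : ℤ) := by
  have hprime (p : ℕ) (hp : p.Prime) : lam p ≠ 0 := by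
    have : Fact p.Prime := ⟨hp⟩
    simp [hlamP p, hp.ne_zero]
  have hlam (d : ℕ) (hd : 0 < d) : lam d ≠ 0 :=
    ne_zero_of_map_mul_of_map_prime_ne_zero (by simp [hlam1]) hlamMul hprime hd.ne'
  exact fun d q hd hq n hn => stmt3_general hlam hlamMul hr hrz hH hd hq hn
end

section
/- There is a constant C = C(h) > 0 such that for every positive integer d, the sum J_d of the absolute values of the coefficients of the auxiliary polynomial h_d satisfies J_d ≤ C·b_d, where b_d denotes the leading coefficient of h_d. -/
/-!
The sum of the norms of the coefficients is a submultiplicative norm on polynomials, so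
substituting `a + b * X` into a polynomial of degree `k` multiplies it by at most
`(‖a‖ + ‖b‖) ^ k`, which is at most `2 ^ k * ‖b‖ ^ k` when `‖a‖ ≤ ‖b‖`. The leading coefficient is
multiplied by exactly `b ^ k`, and dividing by a common scalar does not affect the ratio of the two.
-/

open Polynomial

section SeminormedRing

variable {A : Type*} [SeminormedRing A]

/-- The `ℓ¹` norm of a polynomial (also known as its length): the sum of the norms of its
coefficients. Over `ℤ`, this is the paper's `J_d` when applied to `h_d`. -/
noncomputable def coeffL1Norm (p : A[X]) : ℝ :=
  p.sum fun _ a ↦ ‖a‖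

theorem coeffL1Norm_eq_sum_range' (p : A[X]) {n : ℕ} (hn : p.natDegree < n) :
    coeffL1Norm p = ∑ i ∈ Finset.range n, ‖p.coeff i‖ :=
  sum_over_range' p (fun _ ↦ norm_zero) n hn

theorem coeffL1Norm_eq_sum_range (p : A[X]) :
    coeffL1Norm p = ∑ i ∈ Finset.range (p.natDegree + 1), ‖p.coeff i‖ :=
  coeffL1Norm_eq_sum_range' p p.natDegree.lt_succ_self

theorem coeffL1Norm_nonneg (p : A[X]) : 0 ≤ coeffL1Norm p :=
  Finset.sum_nonneg fun _ _ ↦ norm_nonneg _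

theorem norm_leadingCoeff_le_coeffL1Norm (p : A[X]) : ‖p.leadingCoeff‖ ≤ coeffL1Norm p := by
  rw [coeffL1Norm_eq_sum_range]
  exact Finset.single_le_sum (f := fun i ↦ ‖p.coeff i‖) (fun _ _ ↦ norm_nonneg _)
    (Finset.self_mem_range_succ p.natDegree)

theorem coeffL1Norm_monomial (n : ℕ) (a : A) : coeffL1Norm (monomial n a) = ‖a‖ :=
  sum_monomial_index a _ norm_zero

theorem coeffL1Norm_C (a : A) : coeffL1Norm (C a) = ‖a‖ :=
  coeffL1Norm_monomial 0 a

theorem coeffL1Norm_C_add_C_mul_X (a b : A) : coeffL1Norm (C a + C b * X) = ‖a‖ + ‖b‖ := by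
  have hdegree : (C a + C b * X).natDegree < 2 := by
    rw [add_comm]
    exact Nat.lt_succ_of_le natDegree_linear_le
  simp [coeffL1Norm_eq_sum_range' _ hdegree, Finset.sum_range_succ]

theorem coeffL1Norm_add_le (p q : A[X]) :
    coeffL1Norm (p + q) ≤ coeffL1Norm p + coeffL1Norm q := by
  let n := max p.natDegree q.natDegree + 1
  have hp : p.natDegree < n := Nat.lt_succ_of_le (le_max_left _ _)
  have hq : q.natDegree < n := Nat.lt_succ_of_le (le_max_right _ _)
  have hpq : (p + q).natDegree < n := Nat.lt_succ_of_le (natDegree_add_le p q)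
  rw [coeffL1Norm_eq_sum_range' _ hp, coeffL1Norm_eq_sum_range' _ hq,
    coeffL1Norm_eq_sum_range' _ hpq, ← Finset.sum_add_distrib]
  gcongr with i
  rw [coeff_add]
  exact norm_add_le _ _

theorem coeffL1Norm_sum_le {ι : Type*} (s : Finset ι) (f : ι → A[X]) :
    coeffL1Norm (∑ i ∈ s, f i) ≤ ∑ i ∈ s, coeffL1Norm (f i) :=
  Finset.le_sum_of_subadditive coeffL1Norm (sum_zero_index _).le coeffL1Norm_add_le s f

theorem coeffL1Norm_mul_le (p q : A[X]) :
    coeffL1Norm (p * q) ≤ coeffL1Norm p * coeffL1Norm q :=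
  calc coeffL1Norm (p * q)
      = coeffL1Norm (∑ i ∈ p.support, ∑ j ∈ q.support,
          monomial (i + j) (p.coeff i * q.coeff j)) := by
        rw [mul_eq_sum_sum]; rfl
    _ ≤ ∑ i ∈ p.support, ∑ j ∈ q.support,
          coeffL1Norm (monomial (i + j) (p.coeff i * q.coeff j)) :=
        (coeffL1Norm_sum_le _ _).trans (Finset.sum_le_sum fun _ _ ↦ coeffL1Norm_sum_le _ _)
    _ ≤ ∑ i ∈ p.support, ∑ j ∈ q.support, ‖p.coeff i‖ * ‖q.coeff j‖ := by
        gcongr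
        rw [coeffL1Norm_monomial]
        exact norm_mul_le _ _
    _ = coeffL1Norm p * coeffL1Norm q := (Finset.sum_mul_sum _ _ _ _).symm

theorem coeffL1Norm_C_mul [NormMulClass A] (c : A) (p : A[X]) :
    coeffL1Norm (C c * p) = ‖c‖ * coeffL1Norm p := by
  rw [coeffL1Norm_eq_sum_range' _ (Nat.lt_succ_of_le (natDegree_C_mul_le c p)),
    coeffL1Norm_eq_sum_range, Finset.mul_sum]
  simp only [coeff_C_mul, norm_mul]

variable [NormOneClass A]

theorem coeffL1Norm_pow_le (p : A[X]) (n : ℕ) : coeffL1Norm (p ^ n) ≤ coeffL1Norm p ^ n := by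
  induction n with
  | zero => rw [pow_zero, pow_zero, ← C_1, coeffL1Norm_C, norm_one]
  | succ n ih =>
    rw [pow_succ, pow_succ]
    exact (coeffL1Norm_mul_le _ _).trans (mul_le_mul_of_nonneg_right ih (coeffL1Norm_nonneg p))

theorem coeffL1Norm_comp_le (p : A[X]) {q : A[X]} (hq : 1 ≤ coeffL1Norm q) :
    coeffL1Norm (p.comp q) ≤ coeffL1Norm p * coeffL1Norm q ^ p.natDegree :=
  calc coeffL1Norm (p.comp q)
      = coeffL1Norm (∑ i ∈ p.support, C (p.coeff i) * q ^ i) := by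
        rw [comp_eq_sum_left, sum_def]
    _ ≤ ∑ i ∈ p.support, coeffL1Norm (C (p.coeff i) * q ^ i) := coeffL1Norm_sum_le _ _
    _ ≤ ∑ i ∈ p.support, ‖p.coeff i‖ * coeffL1Norm q ^ p.natDegree := by
        refine Finset.sum_le_sum fun i hi ↦ (coeffL1Norm_mul_le _ _).trans ?_
        rw [coeffL1Norm_C]
        gcongr
        exact (coeffL1Norm_pow_le q i).trans
          (pow_le_pow_right₀ hq (le_natDegree_of_mem_supp i hi))
    _ = coeffL1Norm p * coeffL1Norm q ^ p.natDegree := (Finset.sum_mul _ _ _).symm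

theorem coeffL1Norm_comp_C_add_C_mul_X_le (p : A[X]) {a b : A} (hab : ‖a‖ ≤ ‖b‖) (hb : 1 ≤ ‖b‖) :
    coeffL1Norm (p.comp (C a + C b * X)) ≤
      2 ^ p.natDegree * coeffL1Norm p * ‖b‖ ^ p.natDegree := by
  have hone : 1 ≤ coeffL1Norm (C a + C b * X) := by
    rw [coeffL1Norm_C_add_C_mul_X]
    exact le_add_of_nonneg_of_le (norm_nonneg a) hb
  calc coeffL1Norm (p.comp (C a + C b * X))
      ≤ coeffL1Norm p * (‖a‖ + ‖b‖) ^ p.natDegree := by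
        rw [← coeffL1Norm_C_add_C_mul_X]
        exact coeffL1Norm_comp_le p hone
    _ ≤ coeffL1Norm p * (2 * ‖b‖) ^ p.natDegree := by
        have := coeffL1Norm_nonneg p
        gcongr
        linarith
    _ = 2 ^ p.natDegree * coeffL1Norm p * ‖b‖ ^ p.natDegree := by ring

end SeminormedRing

theorem leadingCoeff_comp_C_add_C_mul_X {R : Type*} [Semiring R] [NoZeroDivisors R] (p : R[X])
    (a : R) {b : R} (hb : b ≠ 0) :
    (p.comp (C a + C b * X)).leadingCoeff = p.leadingCoeff * b ^ p.natDegree := by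
  have hdegree : (C b * X + C a).natDegree ≠ 0 := by
    rw [natDegree_linear hb]
    exact one_ne_zero
  rw [add_comm, leadingCoeff_comp hdegree, leadingCoeff_linear hb]

theorem mul_leadingCoeff_of_C_mul_eq_comp {R : Type*} [Semiring R] [NoZeroDivisors R]
    {h H : R[X]} {a b c : R} (hb : b ≠ 0) (hH : C c * H = h.comp (C a + C b * X)) :
    c * H.leadingCoeff = h.leadingCoeff * b ^ h.natDegree := by
  rw [← leadingCoeff_comp_C_add_C_mul_X h a hb, ← hH, leadingCoeff_mul, leadingCoeff_C]

theorem leadingCoeff_pos_of_C_mul_eq_comp {R : Type*} [Ring R] [LinearOrder R]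
    [IsStrictOrderedRing R] {h H : R[X]} {a b c : R} (hlead : 0 < h.leadingCoeff) (hb : 0 < b)
    (hc : 0 ≤ c) (hH : C c * H = h.comp (C a + C b * X)) : 0 < H.leadingCoeff := by
  refine pos_of_mul_pos_right ?_ hc
  rw [mul_leadingCoeff_of_C_mul_eq_comp hb.ne' hH]
  exact mul_pos hlead (pow_pos hb _)

theorem coeffL1Norm_le_of_C_mul_eq_comp {A : Type*} [NormedRing A] [NormMulClass A]
    [NormOneClass A] {h H : A[X]} {a b c : A} (hh : h ≠ 0) (hab : ‖a‖ ≤ ‖b‖) (hb : 1 ≤ ‖b‖)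
    (hH : C c * H = h.comp (C a + C b * X)) :
    coeffL1Norm H ≤
      2 ^ h.natDegree * coeffL1Norm h / ‖h.leadingCoeff‖ * ‖H.leadingCoeff‖ := by
  have hb₀ : b ≠ 0 := norm_pos_iff.mp (one_pos.trans_le hb)
  have hlead : 0 < ‖h.leadingCoeff‖ := norm_pos_iff.mpr (leadingCoeff_ne_zero.mpr hh)
  have hlead_mul : c * H.leadingCoeff = h.leadingCoeff * b ^ h.natDegree :=
    mul_leadingCoeff_of_C_mul_eq_comp hb₀ hH
  have hlead_norm : ‖c‖ * ‖H.leadingCoeff‖ = ‖h.leadingCoeff‖ * ‖b‖ ^ h.natDegree := by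
    rw [← norm_mul, hlead_mul, norm_mul, norm_pow]
  have hc : 0 < ‖c‖ := by
    refine pos_of_mul_pos_left ?_ (norm_nonneg H.leadingCoeff)
    rw [hlead_norm]
    positivity
  refine le_of_mul_le_mul_left ?_ hc
  calc ‖c‖ * coeffL1Norm H
      = coeffL1Norm (h.comp (C a + C b * X)) := by rw [← coeffL1Norm_C_mul, hH]
    _ ≤ 2 ^ h.natDegree * coeffL1Norm h * ‖b‖ ^ h.natDegree :=
        coeffL1Norm_comp_C_add_C_mul_X_le h hab hb
    _ = 2 ^ h.natDegree * coeffL1Norm h / ‖h.leadingCoeff‖ * (‖c‖ * ‖H.leadingCoeff‖) := by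
        rw [hlead_norm]
        field_simp
    _ = ‖c‖ * (2 ^ h.natDegree * coeffL1Norm h / ‖h.leadingCoeff‖ * ‖H.leadingCoeff‖) := by
        ring

theorem stmt4_general {h : ℤ[X]} (hlead : 0 < h.leadingCoeff) :
    ∃ K : ℝ, 0 < K ∧ ∀ {a b c : ℤ} {H : ℤ[X]}, |a| ≤ b → 0 < b → 0 ≤ c →
      C c * H = h.comp (C a + C b * X) →
        ∑ i ∈ Finset.range (H.natDegree + 1), |(H.coeff i : ℝ)| ≤ K * (H.leadingCoeff : ℝ) := by
  have hh : h ≠ 0 := leadingCoeff_ne_zero.mp hlead.ne'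
  have hlead_norm : 0 < ‖h.leadingCoeff‖ := norm_pos_iff.mpr hlead.ne'
  have hnorm : 0 < coeffL1Norm h := hlead_norm.trans_le (norm_leadingCoeff_le_coeffL1Norm h)
  refine ⟨2 ^ h.natDegree * coeffL1Norm h / ‖h.leadingCoeff‖, by positivity, ?_⟩
  intro a b c H hab hb hc hH
  have hab_norm : ‖a‖ ≤ ‖b‖ := by
    rw [Int.norm_eq_abs, Int.norm_eq_abs]
    exact_mod_cast hab.trans (le_abs_self b)
  have hb_norm : 1 ≤ ‖b‖ := by
    rw [Int.norm_eq_abs]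
    exact_mod_cast Int.one_le_abs hb.ne'
  have hH_norm : ‖H.leadingCoeff‖ = H.leadingCoeff := by
    rw [Int.norm_eq_abs]
    exact abs_of_pos (by exact_mod_cast leadingCoeff_pos_of_C_mul_eq_comp hlead hb hc hH)
  rw [← hH_norm]
  simpa only [coeffL1Norm_eq_sum_range H, Int.norm_eq_abs]
    using coeffL1Norm_le_of_C_mul_eq_comp hh hab_norm hb_norm hH

/-- Proposition 3.3: the sum `J_d` of the absolute values of the coefficients of `h_d`
satisfies `J_d ≤ C·b_d` where `b_d` is the leading coefficient of `h_d`. -/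
theorem stmt4
    (k : ℕ) (hk : 0 < k)
    (h : Polynomial ℤ) (hdeg : h.natDegree = k) (hlead : 0 < h.leadingCoeff)
    (hint : ∀ q : ℕ, 0 < q → ∃ n : ℤ, (q : ℤ) ∣ h.eval n)
    (z : ∀ (p : ℕ) [Fact p.Prime], ℤ_[p])
    (hz : ∀ (p : ℕ) [Fact p.Prime], Polynomial.aeval (z p) h = 0)
    (lam : ℕ → ℕ) (hlam1 : lam 1 = 1)
    (hlamMul : ∀ a b : ℕ, lam (a * b) = lam a * lam b)
    (hlamP : ∀ (p : ℕ) [Fact p.Prime],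
      lam p = p ^ Polynomial.rootMultiplicity (z p) (h.map (algebraMap ℤ ℤ_[p])))
    (r : ℕ → ℤ)
    (hr : ∀ d : ℕ, 0 < d → -(d : ℤ) < r d ∧ r d ≤ 0)
    (hrz : ∀ d : ℕ, 0 < d → ∀ (p : ℕ) [Fact p.Prime], ∀ α : ℕ, p ^ α ∣ d →
      (p : ℤ_[p]) ^ α ∣ (z p - (r d : ℤ_[p])))
    (H : ℕ → Polynomial ℤ)
    (hH : ∀ d : ℕ, 0 < d →
      Polynomial.C (lam d : ℤ) * H d =
        h.comp (Polynomial.C (r d) + Polynomial.C (d : ℤ) * Polynomial.X))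
    :
    ∃ C : ℝ, 0 < C ∧ ∀ d : ℕ, 0 < d →
      (∑ i ∈ Finset.range ((H d).natDegree + 1), |((H d).coeff i : ℝ)|) ≤
        C * ((H d).leadingCoeff : ℝ) := by
  obtain ⟨K, hK, hbound⟩ := stmt4_general hlead
  exact ⟨K, hK, fun d hd ↦ hbound (abs_le.mpr ⟨(hr d hd).1.le, (hr d hd).2.trans (by positivity)⟩)
    (by exact_mod_cast hd) (by positivity) (hH d hd)⟩
end

section
/- There is a constant C = C(h) > 0 such that cont(h_d) ≤ C for every positive integer d, where cont(h_d) denotes the gcd of the nonconstant coefficients of the auxiliary polynomial h_d. -/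
/-!
Let `z` be a root of `h` of multiplicity `m` in a domain containing `ℤ`. Expanding around `z`, the
first nonzero Taylor coefficient of `h` at `z` is its `m`-th one. It divides a nonzero integer
depending only on `h`: a separable `f` having the same roots as `h` over `ℚ` satisfies
`u * f + v * f' = D` and `h ∣ s * f ^ n` with integers `D, s ≠ 0`. Hence the first Taylor
coefficient of `f` at `z` is `f'(z)`, a divisor of `D`, and first Taylor coefficients are
multiplicative, so that of `h` divides `s * D ^ n`.

Working in `ℤ_p`, write `z_p = r_d + d * w`. Recentring `h_d` at `w` turns it into
`h(z_p + d * x) / λ(d)`, whose `m_p`-th coefficient divides the `m_p`-th Taylor coefficient of `h`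
at `z_p`, because `d ^ m_p ∣ λ(d)`. Recentring preserves common divisors of the nonconstant
coefficients, so the `p`-part of `cont(h_d)` divides `s * D ^ n` for every prime `p`.
-/

open Polynomial

section ClearDenominators

variable {A K : Type*} [CommRing A] [IsDomain A] [Field K] [Algebra A K] [IsFractionRing A K]

variable (A) in
theorem exists_map_algebraMap_eq_C_mul (P : K[X]) :
    ∃ b : A, b ≠ 0 ∧ ∃ f : A[X], f.map (algebraMap A K) = C (algebraMap A K b) * P := by
  obtain ⟨b, hb, hf⟩ := IsLocalization.integerNormalization_spec (nonZeroDivisors A) P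
  refine ⟨b, nonZeroDivisors.ne_zero hb, _, hf.trans ?_⟩
  rw [← smul_eq_C_mul, algebraMap_smul]

theorem exists_dvd_C_mul_of_map_dvd_map {p q : A[X]}
    (hpq : p.map (algebraMap A K) ∣ q.map (algebraMap A K)) :
    ∃ s : A, s ≠ 0 ∧ p ∣ C s * q := by
  obtain ⟨t, ht⟩ := hpq
  obtain ⟨s, hs, T, hT⟩ := exists_map_algebraMap_eq_C_mul A t
  refine ⟨s, hs, T, map_injective _ (IsFractionRing.injective A K) ?_⟩
  simp only [Polynomial.map_mul, map_C, ht, hT]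
  ring

theorem exists_mul_add_mul_eq_C_of_isCoprime_map {p q : A[X]}
    (hpq : IsCoprime (p.map (algebraMap A K)) (q.map (algebraMap A K))) :
    ∃ D : A, D ≠ 0 ∧ ∃ u v : A[X], u * p + v * q = C D := by
  obtain ⟨u, v, huv⟩ := hpq
  obtain ⟨b, hb, U, hU⟩ := exists_map_algebraMap_eq_C_mul A u
  obtain ⟨c, hc, V, hV⟩ := exists_map_algebraMap_eq_C_mul A v
  refine ⟨b * c, mul_ne_zero hb hc, C c * U, C b * V,
    map_injective _ (IsFractionRing.injective A K) ?_⟩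
  simp only [Polynomial.map_add, Polynomial.map_mul, map_C, hU, hV, map_mul]
  linear_combination (C (algebraMap A K b) * C (algebraMap A K c)) * huv

theorem exists_separable_map_and_dvd_C_mul_pow [PerfectField K] {h : A[X]} (hh : h ≠ 0) :
    ∃ f : A[X], (f.map (algebraMap A K)).Separable ∧
      ∃ s : A, s ≠ 0 ∧ ∃ n : ℕ, h ∣ C s * f ^ n := by
  classical
  have hhK : h.map (algebraMap A K) ≠ 0 :=
    (Polynomial.map_ne_zero_iff (IsFractionRing.injective A K)).2 hh
  set F := UniqueFactorizationMonoid.radical (h.map (algebraMap A K))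
  have hF : F.Separable :=
    PerfectField.separable_iff_squarefree.2 UniqueFactorizationMonoid.squarefree_radical
  obtain ⟨b, hb, f, hf⟩ := exists_map_algebraMap_eq_C_mul A F
  have hbK : IsUnit (C (algebraMap A K b)) := by
    simpa [isUnit_C] using hb
  have hassoc : Associated F (f.map (algebraMap A K)) :=
    hf ▸ (associated_unit_mul_left F _ hbK).symm
  obtain ⟨n, hn⟩ := UniqueFactorizationMonoid.exists_dvd_radical_self_pow hhK
  obtain ⟨s, hs, hdvd⟩ := exists_dvd_C_mul_of_map_dvd_map (K := K) (p := h) (q := f ^ n) <| by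
    simpa only [Polynomial.map_pow] using hn.trans (hassoc.pow_pow (n := n)).dvd
  exact ⟨f, hf ▸ hF.unit_mul hbK, s, hs, n, hdvd⟩

theorem exists_bezout_derivative_and_dvd_C_mul_pow [CharZero A] {h : A[X]} (hh : h ≠ 0) :
    ∃ (f u v : A[X]) (D s : A) (n : ℕ), D ≠ 0 ∧ s ≠ 0 ∧
      u * f + v * derivative f = C D ∧ h ∣ C s * f ^ n := by
  obtain ⟨f, hsep, s, hs, n, hdvd⟩ :=
    exists_separable_map_and_dvd_C_mul_pow (K := FractionRing A) hh
  rw [Separable, derivative_map] at hsep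
  obtain ⟨D, hD, u, v, huv⟩ := exists_mul_add_mul_eq_C_of_isCoprime_map hsep
  exact ⟨f, u, v, D, s, n, hD, hs, huv, hdvd⟩

end ClearDenominators

section FirstTaylorCoefficient

theorem trailingCoeff_pow {R : Type*} [Semiring R] [NoZeroDivisors R] (p : R[X])
    (n : ℕ) : (p ^ n).trailingCoeff = p.trailingCoeff ^ n := by
  induction n with
  | zero => simp [trailingCoeff]
  | succ n ih => rw [pow_succ, trailingCoeff_mul, ih, pow_succ]

theorem trailingCoeff_taylor {R : Type*} [CommRing R] (z : R) (p : R[X]) :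
    (taylor z p).trailingCoeff = (taylor z p).coeff (p.rootMultiplicity z) := by
  rw [trailingCoeff, rootMultiplicity_eq_natTrailingDegree, taylor_apply]

theorem trailingCoeff_taylor_of_simple_root {R : Type*} [CommRing R] {z : R} {f : R[X]}
    (hf : f.eval z = 0) (hf' : f.derivative.eval z ≠ 0) :
    (taylor z f).trailingCoeff = f.derivative.eval z := by
  have hne : taylor z f ≠ 0 := by
    intro h0
    rw [← taylor_coeff_one, h0, coeff_zero] at hf'
    exact hf' rfl
  have hdeg : (taylor z f).natTrailingDegree = 1 := by
    refine le_antisymm (natTrailingDegree_le_of_ne_zero (by rwa [taylor_coeff_one]))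
      (le_natTrailingDegree hne fun i hi => ?_)
    rw [Nat.lt_one_iff.1 hi, taylor_coeff_zero, hf]
  rw [trailingCoeff, hdeg, taylor_coeff_one]

theorem trailingCoeff_taylor_dvd_of_bezout_derivative {R : Type*} [CommRing R] {z : R}
    {u v f : R[X]} {D : R} (hD : D ≠ 0) (huv : u * f + v * derivative f = C D)
    (hf : f.eval z = 0) : (taylor z f).trailingCoeff ∣ D := by
  have heval : v.eval z * f.derivative.eval z = D := by
    simpa [hf] using congrArg (eval z) huv
  rw [trailingCoeff_taylor_of_simple_root hf (right_ne_zero_of_mul (heval ▸ hD))]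
  exact Dvd.intro_left _ heval

theorem trailingCoeff_taylor_dvd_of_dvd {R : Type*} [CommRing R] [NoZeroDivisors R] {p q : R[X]}
    (z : R) (hpq : p ∣ q) : (taylor z p).trailingCoeff ∣ (taylor z q).trailingCoeff := by
  obtain ⟨t, rfl⟩ := hpq
  rw [taylor_mul, trailingCoeff_mul]
  exact dvd_mul_right _ _

theorem trailingCoeff_taylor_dvd_mul_pow {R : Type*} [CommRing R] [NoZeroDivisors R] {z : R}
    {h u v f : R[X]} {D s : R} {n : ℕ} (hD : D ≠ 0) (hs : s ≠ 0)
    (huv : u * f + v * derivative f = C D) (hdvd : h ∣ C s * f ^ n) (hz : h.eval z = 0) :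
    (taylor z h).trailingCoeff ∣ s * D ^ n := by
  have hfz : f.eval z = 0 := by
    have h0 : s * f.eval z ^ n = 0 := by
      simpa using eval_eq_zero_of_dvd_of_eval_eq_zero hdvd hz
    exact eq_zero_of_pow_eq_zero ((mul_eq_zero.1 h0).resolve_left hs)
  calc (taylor z h).trailingCoeff
      ∣ (taylor z (C s * f ^ n)).trailingCoeff := trailingCoeff_taylor_dvd_of_dvd z hdvd
    _ = s * (taylor z f).trailingCoeff ^ n := by
        rw [taylor_mul, taylor_C, taylor_pow, trailingCoeff_mul, trailingCoeff_pow,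
          trailingCoeff, natTrailingDegree_C, coeff_C_zero]
    _ ∣ s * D ^ n := mul_dvd_mul_left s <|
        pow_dvd_pow_of_dvd (trailingCoeff_taylor_dvd_of_bezout_derivative hD huv hfz) n

theorem exists_forall_trailingCoeff_taylor_dvd.{u} {A : Type*} [CommRing A] [IsDomain A]
    [CharZero A] {h : A[X]} (hh : h ≠ 0) :
    ∃ N : A, N ≠ 0 ∧ ∀ (R : Type u) [CommRing R] [NoZeroDivisors R] [Algebra A R]
      [FaithfulSMul A R] (z : R), aeval z h = 0 →
        (taylor z (h.map (algebraMap A R))).trailingCoeff ∣ algebraMap A R N := by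
  obtain ⟨f, u, v, D, s, n, hD, hs, huv, hdvd⟩ := exists_bezout_derivative_and_dvd_C_mul_pow hh
  refine ⟨s * D ^ n, mul_ne_zero hs (pow_ne_zero n hD), fun R _ _ _ _ z hz => ?_⟩
  have hinj : Function.Injective (algebraMap A R) := FaithfulSMul.algebraMap_injective A R
  have huvR : u.map (algebraMap A R) * f.map (algebraMap A R) +
      v.map (algebraMap A R) * derivative (f.map (algebraMap A R)) = C (algebraMap A R D) := by
    rw [derivative_map, ← Polynomial.map_mul, ← Polynomial.map_mul, ← Polynomial.map_add, huv,
      map_C]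
  have hdvdR : h.map (algebraMap A R) ∣ C (algebraMap A R s) * f.map (algebraMap A R) ^ n := by
    simpa using Polynomial.map_dvd (algebraMap A R) hdvd
  rw [map_mul, map_pow]
  exact trailingCoeff_taylor_dvd_mul_pow ((map_ne_zero_iff _ hinj).2 hD)
    ((map_ne_zero_iff _ hinj).2 hs) huvR hdvdR (by rwa [eval_map_algebraMap])

end FirstTaylorCoefficient

section Rescaling

variable {R : Type*} [CommRing R]

theorem dvd_coeff_taylor_of_dvd_coeff {P : R[X]} {c : R} (hc : ∀ i, i ≠ 0 → c ∣ P.coeff i) (w : R)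
    {i : ℕ} (hi : i ≠ 0) : c ∣ (taylor w P).coeff i := by
  have hdvd : C c ∣ P - C (P.coeff 0) := by
    refine (C_dvd_iff_dvd_coeff _ _).2 fun j => ?_
    rcases eq_or_ne j 0 with rfl | hj
    · simp
    · simpa [coeff_C, hj] using hc j hj
  obtain ⟨K, hK⟩ := hdvd
  rw [eq_add_of_sub_eq hK, map_add, taylor_mul, taylor_C, taylor_C, coeff_add, coeff_C_mul,
    coeff_C_of_ne_zero hi, add_zero]
  exact dvd_mul_right _ _

theorem coeff_taylor_comp_C_add_C_mul_X (h : R[X]) (r d w : R) (i : ℕ) :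
    (taylor w (h.comp (C r + C d * X))).coeff i = d ^ i * (taylor (r + d * w) h).coeff i := by
  have hcomp : taylor w (h.comp (C r + C d * X)) = (taylor (r + d * w) h).comp (C d * X) := by
    simp only [taylor_apply, comp_assoc, add_comp, mul_comp, C_comp, X_comp, C_add, C_mul]
    congr 1
    ring
  rw [hcomp, comp_C_mul_X_coeff, mul_comm]

theorem dvd_coeff_taylor_of_C_mul_eq_comp [NoZeroDivisors R] {h P : R[X]} {r d z l c : R} {m : ℕ}
    (hd : d ≠ 0) (hdz : d ∣ z - r) (hdl : d ^ m ∣ l) (hP : C l * P = h.comp (C r + C d * X))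
    (hm : m ≠ 0) (hc : ∀ i, i ≠ 0 → c ∣ P.coeff i) : c ∣ (taylor z h).coeff m := by
  obtain ⟨w, hw⟩ := hdz
  obtain ⟨e, rfl⟩ := hdl
  have hcoeff : d ^ m * (e * (taylor w P).coeff m) = d ^ m * (taylor z h).coeff m := by
    rw [← mul_assoc, ← coeff_C_mul, ← taylor_C w, ← taylor_mul, hP,
      coeff_taylor_comp_C_add_C_mul_X, ← hw, add_sub_cancel]
  rw [← mul_left_cancel₀ (pow_ne_zero m hd) hcoeff]
  exact (dvd_coeff_taylor_of_dvd_coeff hc w hm).mul_left e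

end Rescaling

section Padic

variable {p : ℕ} [Fact p.Prime]

theorem associated_natCast_pow_factorization {d : ℕ} (hd : d ≠ 0) :
    Associated (d : ℤ_[p]) ((p : ℤ_[p]) ^ d.factorization p) := by
  have hunit : IsUnit ((ordCompl[p] d : ℕ) : ℤ_[p]) := by
    rw [PadicInt.isUnit_iff, PadicInt.norm_natCast_eq_one_iff]
    exact Nat.coprime_ordCompl Fact.out hd
  nth_rw 1 [← Nat.ordProj_mul_ordCompl_eq_self d p]
  rw [Nat.cast_mul, Nat.cast_pow]
  exact associated_mul_unit_left _ _ hunit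

theorem natCast_pow_dvd_natCast_map {φ : ℕ →* ℕ} {m : ℕ} (hφ : p ^ m ∣ φ p) {d : ℕ} (hd : d ≠ 0) :
    (d : ℤ_[p]) ^ m ∣ (φ d : ℤ_[p]) := by
  have hpow : (p ^ d.factorization p) ^ m ∣ φ d := by
    rw [pow_right_comm]
    exact (pow_dvd_pow_of_dvd hφ _).trans (map_pow φ p _ ▸ map_dvd φ (Nat.ordProj_dvd d p))
  refine ((associated_natCast_pow_factorization hd).pow_pow (n := m)).dvd.trans ?_
  exact_mod_cast Nat.cast_dvd_cast hpow

end Padic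

/-- The paper's `cont(g)`: the gcd of the nonconstant coefficients of `g`, as a natural number,
which is `0` when `g` is constant. -/
def nonconstContent (g : ℤ[X]) : ℕ :=
  (Finset.Icc 1 g.natDegree).gcd fun i => (g.coeff i).natAbs

theorem natCast_dvd_coeff_of_dvd_nonconstContent {g : ℤ[X]} {n : ℕ} (hn : n ∣ nonconstContent g)
    {i : ℕ} (hi : i ≠ 0) : (n : ℤ) ∣ g.coeff i := by
  rcases le_or_gt i g.natDegree with hle | hlt
  · rw [Int.natCast_dvd]
    exact hn.trans (Finset.gcd_dvd (Finset.mem_Icc.2 ⟨Nat.one_le_iff_ne_zero.2 hi, hle⟩))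
  · rw [coeff_eq_zero_of_natDegree_lt hlt]
    exact dvd_zero _

theorem pow_dvd_trailingCoeff_taylor_of_pow_dvd_nonconstContent {p : ℕ} [Fact p.Prime]
    {h P : ℤ[X]} (hh : h ≠ 0) {z : ℤ_[p]} (hz : aeval z h = 0) {lam : ℕ →* ℕ}
    (hlam : p ^ (h.map (algebraMap ℤ ℤ_[p])).rootMultiplicity z ∣ lam p)
    {d : ℕ} (hd : d ≠ 0) {r : ℤ} (hr : (p : ℤ_[p]) ^ d.factorization p ∣ z - r)
    (hP : C (lam d : ℤ) * P = h.comp (C r + C (d : ℤ) * X))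
    {b : ℕ} (hb : p ^ b ∣ nonconstContent P) :
    (p : ℤ_[p]) ^ b ∣ (taylor z (h.map (algebraMap ℤ ℤ_[p]))).trailingCoeff := by
  have hmult : (h.map (algebraMap ℤ ℤ_[p])).rootMultiplicity z ≠ 0 := by
    refine ((rootMultiplicity_pos ?_).2 ?_).ne'
    · exact (Polynomial.map_ne_zero_iff (RingHom.injective_int _)).2 hh
    · rwa [IsRoot, eval_map_algebraMap]
  have hP' : C (lam d : ℤ_[p]) * P.map (algebraMap ℤ ℤ_[p]) =
      (h.map (algebraMap ℤ ℤ_[p])).comp (C (r : ℤ_[p]) + C (d : ℤ_[p]) * X) := by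
    simpa [Polynomial.map_comp] using congrArg (Polynomial.map (algebraMap ℤ ℤ_[p])) hP
  rw [trailingCoeff_taylor]
  refine dvd_coeff_taylor_of_C_mul_eq_comp (Nat.cast_ne_zero.2 hd)
    ((associated_natCast_pow_factorization hd).dvd.trans hr)
    (natCast_pow_dvd_natCast_map hlam hd) hP' hmult fun i hi => ?_
  simpa using map_dvd (algebraMap ℤ ℤ_[p]) (natCast_dvd_coeff_of_dvd_nonconstContent hb hi)

theorem stmt5_general {h : ℤ[X]} (hh : h ≠ 0) :
    ∃ N : ℕ, 0 < N ∧ ∀ z : ∀ (p : ℕ) [Fact p.Prime], ℤ_[p],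
      (∀ (p : ℕ) [Fact p.Prime], aeval (z p) h = 0) →
      ∀ lam : ℕ →* ℕ,
      (∀ (p : ℕ) [Fact p.Prime],
        lam p = p ^ rootMultiplicity (z p) (h.map (algebraMap ℤ ℤ_[p]))) →
      ∀ (d : ℕ) (r : ℤ) (P : ℤ[X]), 0 < d →
      (∀ (p : ℕ) [Fact p.Prime], ∀ α : ℕ, p ^ α ∣ d → (p : ℤ_[p]) ^ α ∣ z p - r) →
      C (lam d : ℤ) * P = h.comp (C r + C (d : ℤ) * X) →
      nonconstContent P ∣ N := by
  obtain ⟨N, hN, hdvd⟩ := exists_forall_trailingCoeff_taylor_dvd hh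
  refine ⟨N.natAbs, Int.natAbs_pos.2 hN, fun z hz lam hlam d r P hd hr hP => ?_⟩
  refine (Nat.dvd_iff_prime_pow_dvd_dvd _ _).2 fun p b hp hb => ?_
  have : Fact p.Prime := ⟨hp⟩
  have hlocal : (p : ℤ_[p]) ^ b ∣ algebraMap ℤ ℤ_[p] N :=
    (pow_dvd_trailingCoeff_taylor_of_pow_dvd_nonconstContent hh (hz p) (hlam p).symm.dvd hd.ne'
      (hr p _ (Nat.ordProj_dvd d p)) hP hb).trans (hdvd ℤ_[p] (z p) (hz p))
  rw [← Int.natCast_dvd, Nat.cast_pow]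
  exact (PadicInt.pow_p_dvd_int_iff b N).1 hlocal

/-- The content `cont(h_d)` (gcd of the nonconstant coefficients of `h_d`) is bounded
uniformly in `d`. -/
theorem stmt5
    (k : ℕ) (hk : 0 < k)
    (h : Polynomial ℤ) (hdeg : h.natDegree = k) (hlead : 0 < h.leadingCoeff)
    (hint : ∀ q : ℕ, 0 < q → ∃ n : ℤ, (q : ℤ) ∣ h.eval n)
    (z : ∀ (p : ℕ) [Fact p.Prime], ℤ_[p])
    (hz : ∀ (p : ℕ) [Fact p.Prime], Polynomial.aeval (z p) h = 0)
    (lam : ℕ → ℕ) (hlam1 : lam 1 = 1)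
    (hlamMul : ∀ a b : ℕ, lam (a * b) = lam a * lam b)
    (hlamP : ∀ (p : ℕ) [Fact p.Prime],
      lam p = p ^ Polynomial.rootMultiplicity (z p) (h.map (algebraMap ℤ ℤ_[p])))
    (r : ℕ → ℤ)
    (hr : ∀ d : ℕ, 0 < d → -(d : ℤ) < r d ∧ r d ≤ 0)
    (hrz : ∀ d : ℕ, 0 < d → ∀ (p : ℕ) [Fact p.Prime], ∀ α : ℕ, p ^ α ∣ d →
      (p : ℤ_[p]) ^ α ∣ (z p - (r d : ℤ_[p])))
    (H : ℕ → Polynomial ℤ)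
    (hH : ∀ d : ℕ, 0 < d →
      Polynomial.C (lam d : ℤ) * H d =
        h.comp (Polynomial.C (r d) + Polynomial.C (d : ℤ) * Polynomial.X))
    :
    ∃ C : ℕ, 0 < C ∧ ∀ d : ℕ, 0 < d →
      (Finset.Icc 1 (H d).natDegree).gcd (fun i => ((H d).coeff i).natAbs) ≤ C := by
  obtain ⟨C, hC, hdvd⟩ := stmt5_general (h := h) (leadingCoeff_ne_zero.1 hlead.ne')
  exact ⟨C, hC, fun d hd => Nat.le_of_dvd hC <|
    hdvd z hz ⟨⟨lam, hlam1⟩, hlamMul⟩ hlamP d (r d) (H d) hd (hrz d hd) (hH d hd)⟩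
end

section
/- There is a constant c = c(h) > 0 such that for every positive integer d and every real Y ≥ 2 one has w_d(Y) ≥ c·(log Y)^{1−k}, where w_d(Y) = ∏_{p ≤ Y} (1 − j_d(p)/p^{γ_d(p)}), the product being over primes p ≤ Y. -/
/-- `γ(g;p)`: the smallest positive integer `γ` such that the derivative `g'` does not vanish
identically modulo `p^γ`. -/
noncomputable def gammaExp (g : Polynomial ℤ) (p : ℕ) : ℕ :=
  sInf {c : ℕ | 0 < c ∧ ¬ ∀ n : ℤ, ((p : ℤ) ^ c) ∣ (Polynomial.derivative g).eval n}

/-- `j(g;p)`: the number of residues `s` modulo `p^{γ(g;p)}` with `g'(s) ≡ 0 (mod p^{γ(g;p)})`. -/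
noncomputable def jCount (g : Polynomial ℤ) (p : ℕ) : ℕ := by
  classical
  exact ((Finset.range (p ^ gammaExp g p)).filter
    (fun s => ((p : ℤ) ^ gammaExp g p) ∣ (Polynomial.derivative g).eval (s : ℤ))).card

/-- `∏_{p ≤ Y} (1 - j(g;p)/p^{γ(g;p)})`, the product being over primes `p ≤ Y`. -/
noncomputable def wProd (g : Polynomial ℤ) (Y : ℝ) : ℝ := by
  classical
  exact ∏ p ∈ (Finset.range (⌊Y⌋₊ + 1)).filter Nat.Prime,
    (1 - (jCount g p : ℝ) / (p : ℝ) ^ gammaExp g p)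

/-- `W(g;Y) = {n ∈ ℤ : g'(n) ≢ 0 (mod p^{γ(g;p)}) for all primes p ≤ Y}`. -/
def WSet (g : Polynomial ℤ) (Y : ℝ) : Set ℤ :=
  {n : ℤ | ∀ p : ℕ, p.Prime → (p : ℝ) ≤ Y →
    ¬ ((p : ℤ) ^ gammaExp g p ∣ (Polynomial.derivative g).eval n)}

/-- `W_q(g;Y) = {n ∈ ℤ : g'(n) ≢ 0 (mod p^{γ(g;p)}) for all primes p ≤ Y with p^{γ(g;p)} ∣ q}`. -/
def WqSet (g : Polynomial ℤ) (Y : ℝ) (q : ℕ) : Set ℤ :=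
  {n : ℤ | ∀ p : ℕ, p.Prime → (p : ℝ) ≤ Y → p ^ gammaExp g p ∣ q →
    ¬ ((p : ℤ) ^ gammaExp g p ∣ (Polynomial.derivative g).eval n)}

/-!
The content of every `h_d'` divides one nonzero integer `N` depending only on `h`. Indeed,
`ℚ[x]/(h)` is Artinian, so for each polynomial `f` there is a nonzero integer divisible by `f(z)`
for every root `z` of `h` in any domain with `f(z) ≠ 0`; applied to the Hasse derivatives of `h'`,
this bounds the first nonvanishing Taylor coefficient of `h'` at `z_p`, and that coefficient is a
multiple in `ℤ_p` of the content of `h_d'`.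

Hence every prime `p` has `γ_d(p)` bounded in terms of `k` and `N`, so the local factors at small
primes are bounded below, while a large prime does not divide the content and so contributes at
least `1 - (k - 1)/p`. The product of these factors is controlled by Mertens' estimate
`∑_{p ≤ n} 1/p ≤ log log n + O(1)`.
-/

open Polynomial

section FixedDivisor

theorem superFactorial_pos : ∀ n : ℕ, 0 < n.superFactorial
  | 0 => one_pos
  | n + 1 => Nat.mul_pos (n + 1).factorial_pos (superFactorial_pos n)

theorem dvd_superFactorial_mul_coeff {R : Type*} [CommRing R] {f : R[X]} {q : R} {k : ℕ}
    (hk : f.natDegree ≤ k) (hq : ∀ n : ℕ, q ∣ f.eval (n : R)) (i : ℕ) :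
    q ∣ k.superFactorial * f.coeff i := by
  obtain hi | hi := lt_or_ge k i
  · simp [coeff_eq_zero_of_natDegree_lt (hk.trans_lt hi)]
  set V : Matrix (Fin (k + 1)) (Fin (k + 1)) R := Matrix.vandermonde fun j ↦ (j : R)
  set a : Fin (k + 1) → R := fun j ↦ f.coeff j
  have hVa : V.mulVec a = fun j : Fin (k + 1) ↦ f.eval (j : R) := by
    ext j
    rw [eval_eq_sum_range' (Nat.lt_succ_of_le hk), Finset.sum_range]
    simp only [V, a, Matrix.mulVec, dotProduct, Matrix.vandermonde_apply, mul_comm]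
  have hdet : V.det • a = V.adjugate.mulVec (V.mulVec a) := by
    rw [Matrix.mulVec_mulVec, Matrix.adjugate_mul, Matrix.smul_mulVec, Matrix.one_mulVec]
  have hi' := congrFun hdet ⟨i, Nat.lt_succ_of_le hi⟩
  rw [Matrix.det_vandermonde_id_eq_superFactorial, hVa] at hi'
  change k.superFactorial * f.coeff i = _ at hi'
  rw [hi', Matrix.mulVec, dotProduct]
  exact Finset.dvd_sum fun j _ ↦ (hq _).mul_left _

theorem dvd_superFactorial_mul_content {f : ℤ[X]} {q : ℤ} {k : ℕ} (hk : f.natDegree ≤ k)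
    (hq : ∀ n : ℕ, q ∣ f.eval (n : ℤ)) : q ∣ k.superFactorial * f.content := by
  have hdvd : q ∣ (C (k.superFactorial : ℤ) * f).content := by
    rw [dvd_content_iff_C_dvd, C_dvd_iff_dvd_coeff]
    intro i
    rw [coeff_C_mul]
    exact dvd_superFactorial_mul_coeff hk hq i
  rwa [content_C_mul, Int.normalize_of_nonneg (Int.natCast_nonneg _)] at hdvd

end FixedDivisor

section UniformDivisor

theorem exists_pow_succ_mul_eq_pow_add_mul {K : Type*} [Field K] {P : K[X]} (hP : P ≠ 0)
    (f : K[X]) : ∃ (n : ℕ) (A B : K[X]), f ^ (n + 1) * B = f ^ n + P * A := by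
  have : Module.Finite K (AdjoinRoot P) := (AdjoinRoot.powerBasis hP).finite
  have : IsArtinianRing (AdjoinRoot P) := IsArtinianRing.of_finite K _
  obtain ⟨n, y, hy⟩ := IsArtinian.exists_pow_succ_smul_dvd (AdjoinRoot.mk P f) (1 : AdjoinRoot P)
  obtain ⟨B, rfl⟩ := AdjoinRoot.mk_surjective y
  have hdvd : P ∣ f ^ (n + 1) * B - f ^ n := by
    rw [← AdjoinRoot.mk_eq_mk]
    simpa using hy
  obtain ⟨A, hA⟩ := hdvd
  exact ⟨n, A, B, by rw [← hA]; ring⟩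

theorem exists_ne_zero_pow_succ_mul_eq {R : Type*} [CommRing R] [IsDomain R] {P : R[X]} (hP : P ≠ 0)
    (f : R[X]) : ∃ N : R, N ≠ 0 ∧ ∃ (n : ℕ) (A B : R[X]),
      f ^ (n + 1) * B = C N * f ^ n + P * A := by
  let K := FractionRing R
  have hinj : Function.Injective (algebraMap R K) := IsFractionRing.injective R K
  obtain ⟨n, A, B, hAB⟩ := exists_pow_succ_mul_eq_pow_add_mul
    ((Polynomial.map_ne_zero_iff hinj).2 hP) (f.map (algebraMap R K))
  obtain ⟨a, ha, hA⟩ := IsLocalization.integerNormalization_spec (nonZeroDivisors R) A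
  obtain ⟨b, hb, hB⟩ := IsLocalization.integerNormalization_spec (nonZeroDivisors R) B
  refine ⟨a * b, nonZeroDivisors.ne_zero (mul_mem ha hb), n,
    C b * IsLocalization.integerNormalization (nonZeroDivisors R) A,
    C a * IsLocalization.integerNormalization (nonZeroDivisors R) B, ?_⟩
  rw [← IsScalarTower.algebraMap_smul K, smul_eq_C_mul] at hA hB
  apply map_injective _ hinj
  simp only [Polynomial.map_mul, Polynomial.map_pow, Polynomial.map_add, map_C, hA, hB, map_mul]
  linear_combination C (algebraMap R K a) * C (algebraMap R K b) * hAB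

theorem exists_ne_zero_forall_aeval_dvd {R : Type*} [CommRing R] [IsDomain R] {P : R[X]}
    (hP : P ≠ 0) (f : R[X]) : ∃ N : R, N ≠ 0 ∧
      ∀ (S : Type*) [CommRing S] [IsDomain S] [Algebra R S] (z : S),
        aeval z P = 0 → aeval z f ≠ 0 → aeval z f ∣ algebraMap R S N := by
  obtain ⟨N, hN, n, A, B, hAB⟩ := exists_ne_zero_pow_succ_mul_eq hP f
  refine ⟨N, hN, fun S _ _ _ z hPz hfz ↦ ⟨aeval z B, mul_left_cancel₀ (pow_ne_zero n hfz) ?_⟩⟩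
  have hz := congrArg (aeval z) hAB
  simp only [map_add, map_mul, map_pow, aeval_C, hPz] at hz
  linear_combination -hz

theorem taylor_map_coeff {R S : Type*} [CommSemiring R] [CommSemiring S] [Algebra R S] (f : R[X])
    (z : S) (i : ℕ) : (taylor z (f.map (algebraMap R S))).coeff i = aeval z (hasseDeriv i f) := by
  have : hasseDeriv i (f.map (algebraMap R S)) = (hasseDeriv i f).map (algebraMap R S) := by
    ext; simp [hasseDeriv_coeff]
  rw [taylor_coeff, this, eval_map_algebraMap]

theorem exists_ne_zero_forall_taylor_trailingCoeff_dvd {R : Type*} [CommRing R] [IsDomain R]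
    {P f : R[X]} (hP : P ≠ 0) (hf : f ≠ 0) : ∃ N : R, N ≠ 0 ∧
      ∀ (S : Type*) [CommRing S] [IsDomain S] [Algebra R S] [FaithfulSMul R S] (z : S),
        aeval z P = 0 → (taylor z (f.map (algebraMap R S))).trailingCoeff ∣ algebraMap R S N := by
  choose N hN hdvd using fun i ↦ exists_ne_zero_forall_aeval_dvd hP (hasseDeriv i f)
  refine ⟨∏ i ∈ Finset.range (f.natDegree + 1), N i, Finset.prod_ne_zero_iff.2 fun i _ ↦ hN i,
    fun S _ _ _ _ z hPz ↦ ?_⟩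
  set g := taylor z (f.map (algebraMap R S))
  have hg : g.trailingCoeff ≠ 0 := by
    rw [Ne, trailingCoeff_eq_zero, taylor_eq_zero,
      Polynomial.map_eq_zero_iff (FaithfulSMul.algebraMap_injective R S)]
    exact hf
  have hmem : g.natTrailingDegree ∈ Finset.range (f.natDegree + 1) := by
    rw [Finset.mem_range, Nat.lt_succ_iff]
    calc g.natTrailingDegree ≤ g.natDegree := natTrailingDegree_le_natDegree g
      _ = (f.map (algebraMap R S)).natDegree := natDegree_taylor ..
      _ ≤ f.natDegree := natDegree_map_le
  rw [trailingCoeff, taylor_map_coeff] at hg ⊢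
  exact (hdvd _ S z hPz hg).trans (map_dvd _ (Finset.dvd_prod_of_mem N hmem))

end UniformDivisor

section AuxiliaryPolynomial

theorem isUnit_natCast_padicInt {p : ℕ} [Fact p.Prime] {n : ℕ} (hn : ¬p ∣ n) :
    IsUnit (n : ℤ_[p]) := by
  rw [PadicInt.isUnit_iff, PadicInt.norm_natCast_eq_one_iff]
  exact (Nat.Prime.coprime_iff_not_dvd Fact.out).2 hn

theorem intCast_dvd_of_forall_padicInt_dvd {a b : ℤ}
    (hab : ∀ (p : ℕ) [Fact p.Prime], (a : ℤ_[p]) ∣ b) : a ∣ b := by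
  rw [← Int.natAbs_dvd_natAbs, Nat.dvd_iff_prime_pow_dvd_dvd]
  intro p k hp hk
  have : Fact p.Prime := ⟨hp⟩
  have hpa : (p : ℤ_[p]) ^ k ∣ a := by
    rw [PadicInt.pow_p_dvd_int_iff]
    exact_mod_cast Int.natCast_dvd.2 hk
  have hpb := (PadicInt.pow_p_dvd_int_iff k b).1 (hpa.trans (hab p))
  exact Int.natCast_dvd.1 (by exact_mod_cast hpb)

theorem taylor_derivative_trailingCoeff {R : Type*} [CommRing R] [IsDomain R] [CharZero R]
    {h : R[X]} {z : R} (hz : h.IsRoot z) :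
    (taylor z (derivative h)).trailingCoeff =
      (taylor z (derivative h)).coeff (h.rootMultiplicity z - 1) := by
  rw [trailingCoeff, taylor_apply, ← rootMultiplicity_eq_natTrailingDegree,
    derivative_rootMultiplicity_of_root hz]

-- Substituting `x = u⁻¹ * (y + s)`, where `z - r = c * s`, turns `f (r + c * u * x)` into
-- `f (z + c * y)`, whose coefficient of `y ^ m` is `c ^ m` times that of `f (z + y)`.
theorem dvd_taylor_coeff_of_C_dvd {R : Type*} [CommRing R] {f G : R[X]} {z r c u L a : R} {m : ℕ}
    (hc : c ∈ nonZeroDivisors R) (hu : IsUnit u) (hr : c ∣ z - r)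
    (hG : C (c ^ (m + 1) * L) * G = C (c * u) * f.comp (C r + C (c * u) * X)) (ha : C a ∣ G) :
    a ∣ (taylor z f).coeff m := by
  obtain ⟨s, hs⟩ := hr
  obtain ⟨v, huv⟩ := hu.exists_right_inv
  obtain ⟨F, rfl⟩ := ha
  set σ : R[X] := C v * (X + C s)
  have hσ : (C r + C (c * u) * X).comp σ = C c * X + C z := by
    have hCz : (C z : R[X]) = C r + C c * C s := by rw [← C_mul, ← hs, ← C_add]; ring_nf
    have hCuv : (C u * C v : R[X]) = 1 := by rw [← C_mul, huv, C_1]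
    simp only [add_comp, mul_comp, C_comp, X_comp, σ, hCz, C_mul]
    linear_combination C c * (X + C s) * hCuv
  have hcomp : f.comp (C c * X + C z) = (taylor z f).comp (C c * X) := by
    simp [taylor_apply, comp_assoc]
  have hcoeff := congrArg (fun g : R[X] ↦ (g.comp σ).coeff m) hG
  simp only [mul_comp, C_comp, comp_assoc, hσ, hcomp, coeff_C_mul, comp_C_mul_X_coeff] at hcoeff
  refine ⟨v * L * (F.comp σ).coeff m,
    (mul_cancel_left_mem_nonZeroDivisors (pow_mem hc (m + 1))).1 ?_⟩
  linear_combination (-v) * hcoeff - c ^ (m + 1) * (taylor z f).coeff m * huv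

theorem intCast_dvd_taylor_derivative_trailingCoeff {p : ℕ} [Fact p.Prime] {h H : ℤ[X]}
    {z : ℤ_[p]} {α d L : ℕ} {r a : ℤ} (hh : h ≠ 0) (hz : aeval z h = 0) (hd : ¬p ∣ d)
    (hr : (p : ℤ_[p]) ^ α ∣ z - r)
    (hH : C (((p ^ rootMultiplicity z (h.map (algebraMap ℤ ℤ_[p]))) ^ α * L : ℕ) : ℤ) * H =
      h.comp (C r + C ((p ^ α * d : ℕ) : ℤ) * X))
    (ha : C a ∣ derivative H) :
    (a : ℤ_[p]) ∣ (taylor z ((derivative h).map (algebraMap ℤ ℤ_[p]))).trailingCoeff := by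
  set φ := algebraMap ℤ ℤ_[p]
  have hroot : (h.map φ).IsRoot z := by rw [IsRoot.def, eval_map_algebraMap, hz]
  have hpos : 0 < rootMultiplicity z (h.map φ) :=
    (rootMultiplicity_pos ((Polynomial.map_ne_zero_iff (RingHom.injective_int φ)).2 hh)).2 hroot
  obtain ⟨m, hm⟩ := Nat.exists_eq_add_one.2 hpos
  have hc : (p : ℤ_[p]) ^ α ∈ nonZeroDivisors ℤ_[p] :=
    mem_nonZeroDivisors_of_ne_zero (pow_ne_zero _ PadicInt.prime_p.ne_zero)
  have haφ : C (a : ℤ_[p]) ∣ (derivative H).map φ := by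
    simpa [φ] using map_dvd (mapRingHom φ) ha
  have hderiv : C (((p : ℤ_[p]) ^ α) ^ (m + 1) * L) * (derivative H).map φ =
      C (p ^ α * d : ℤ_[p]) *
        (derivative (h.map φ)).comp (C (r : ℤ_[p]) + C (p ^ α * d : ℤ_[p]) * X) := by
    rw [hm, pow_right_comm] at hH
    have hder := congrArg derivative hH
    rw [derivative_C_mul, derivative_comp, derivative_add, derivative_C, derivative_C_mul_X,
      zero_add] at hder
    simpa [Polynomial.map_comp, φ] using congrArg (Polynomial.map φ) hder
  rw [← derivative_map, taylor_derivative_trailingCoeff hroot, hm, Nat.add_sub_cancel]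
  exact dvd_taylor_coeff_of_C_dvd hc (isUnit_natCast_padicInt hd) hr hderiv haφ

theorem exists_ne_zero_forall_content_derivative_dvd {h : ℤ[X]} (hh' : derivative h ≠ 0) :
    ∃ N : ℤ, N ≠ 0 ∧ ∀ (z : ∀ (p : ℕ) [Fact p.Prime], ℤ_[p]) (lam : ℕ →* ℕ) (d : ℕ) (r : ℤ)
      (H : ℤ[X]), (∀ (p : ℕ) [Fact p.Prime], aeval (z p) h = 0) →
      (∀ (p : ℕ) [Fact p.Prime],
        lam p = p ^ rootMultiplicity (z p) (h.map (algebraMap ℤ ℤ_[p]))) →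
      d ≠ 0 → (∀ (p : ℕ) [Fact p.Prime] (α : ℕ), p ^ α ∣ d → (p : ℤ_[p]) ^ α ∣ z p - r) →
      C (lam d : ℤ) * H = h.comp (C r + C (d : ℤ) * X) → (derivative H).content ∣ N := by
  have hh : h ≠ 0 := by rintro rfl; simp at hh'
  obtain ⟨N, hN, hdvd⟩ := exists_ne_zero_forall_taylor_trailingCoeff_dvd hh hh'
  refine ⟨N, hN, fun z lam d r H hz hlam hd hr hH ↦ intCast_dvd_of_forall_padicInt_dvd ?_⟩
  intro p hp
  obtain ⟨α, e, he, rfl⟩ := Nat.exists_eq_pow_mul_and_not_dvd hd p hp.out.ne_one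
  rw [map_mul, map_pow, hlam p] at hH
  exact (intCast_dvd_taylor_derivative_trailingCoeff hh (hz p) he (hr p α (dvd_mul_right _ _)) hH
    (C_content_dvd _)).trans (by simpa using hdvd ℤ_[p] (z p) (hz p))

theorem natDegree_eq_of_C_mul_eq_comp {R : Type*} [CommRing R] [IsDomain R] {h H : R[X]}
    {l r d : R} (hh : h.natDegree ≠ 0) (hd : d ≠ 0) (hH : C l * H = h.comp (C r + C d * X)) :
    H.natDegree = h.natDegree := by
  have hcomp : (h.comp (C r + C d * X)).natDegree = h.natDegree := by
    rw [natDegree_comp, add_comm, natDegree_linear hd, mul_one]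
  have hl : l ≠ 0 := by
    rintro rfl
    rw [← hH, C_0, zero_mul, natDegree_zero] at hcomp
    exact hh hcomp.symm
  rw [← hcomp, ← hH, natDegree_C_mul hl]

end AuxiliaryPolynomial

section Mertens

open Finset
open Nat (primesLE)

theorem prod_primesLE_pow_div_dvd_factorial (n : ℕ) :
    ∏ p ∈ primesLE n, p ^ (n / p) ∣ n.factorial := by
  refine Finset.prod_dvd_of_isRelPrime (fun p hp q hq hpq ↦ ?_) fun p hp ↦ ?_
  · rw [Function.onFun, ← Nat.coprime_iff_isRelPrime]
    exact Nat.coprime_pow_primes _ _ (Nat.prime_of_mem_primesLE hp)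
      (Nat.prime_of_mem_primesLE hq) hpq
  · have hp := Nat.prime_of_mem_primesLE hp
    have hpow : p ^ (n / p) ∣ (p * (n / p)).factorial := by
      rw [hp.pow_dvd_iff_le_factorization (Nat.factorial_ne_zero _),
        Nat.factorization_factorial_mul hp]
      exact Nat.le_add_left _ _
    exact hpow.trans (Nat.factorial_dvd_factorial (Nat.mul_div_le n p))

theorem sum_primesLE_div_mul_log_le (n : ℕ) :
    ∑ p ∈ primesLE n, ((n / p : ℕ) : ℝ) * Real.log p ≤ n * Real.log n := by
  have hpos (p) (hp : p ∈ primesLE n) : 0 < p ^ (n / p) :=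
    pow_pos (Nat.prime_of_mem_primesLE hp).pos _
  calc ∑ p ∈ primesLE n, ((n / p : ℕ) : ℝ) * Real.log p
      = Real.log (∏ p ∈ primesLE n, p ^ (n / p) : ℕ) := by
        rw [Nat.cast_prod, Real.log_prod fun p hp ↦ Nat.cast_ne_zero.2 (hpos p hp).ne']
        simp only [Nat.cast_pow, Real.log_pow]
    _ ≤ Real.log (n ^ n : ℕ) := by
        refine Real.log_le_log (mod_cast Finset.prod_pos hpos) (mod_cast ?_)
        exact (Nat.le_of_dvd n.factorial_pos (prod_primesLE_pow_div_dvd_factorial n)).trans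
          n.factorial_le_pow
    _ = n * Real.log n := by rw [Nat.cast_pow, Real.log_pow]

theorem sum_primesLE_inv_mul_log_le {n : ℕ} (hn : n ≠ 0) :
    ∑ p ∈ primesLE n, (p : ℝ)⁻¹ * Real.log p ≤ Real.log n + Real.log 4 := by
  have hn' : (0 : ℝ) < n := by positivity
  have hfloor (p : ℕ) : (n : ℝ) * ((p : ℝ)⁻¹ * Real.log p) ≤
      ((n / p : ℕ) : ℝ) * Real.log p + Real.log p := by
    have hdiv : (n : ℝ) / p ≤ (n / p : ℕ) + 1 := by
      rw [← Nat.floor_div_eq_div (K := ℝ)]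
      exact (Nat.lt_floor_add_one _).le
    calc (n : ℝ) * ((p : ℝ)⁻¹ * Real.log p) = n / p * Real.log p := by ring
      _ ≤ ((n / p : ℕ) + 1) * Real.log p := by gcongr
      _ = _ := by ring
  have htheta : ∑ p ∈ primesLE n, Real.log p ≤ Real.log 4 * n := by
    rw [← Chebyshev.theta_eq_sum_primesLE_log]
    exact Chebyshev.theta_le_log4_mul_x hn'.le
  refine le_of_mul_le_mul_left ?_ hn'
  calc (n : ℝ) * ∑ p ∈ primesLE n, (p : ℝ)⁻¹ * Real.log p
      ≤ ∑ p ∈ primesLE n, ((n / p : ℕ) : ℝ) * Real.log p + ∑ p ∈ primesLE n, Real.log p := by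
        rw [Finset.mul_sum, ← Finset.sum_add_distrib]
        exact Finset.sum_le_sum fun p _ ↦ hfloor p
    _ ≤ n * Real.log n + Real.log 4 * n := add_le_add (sum_primesLE_div_mul_log_le n) htheta
    _ = n * (Real.log n + Real.log 4) := by ring

theorem div_add_log_sub_div_le {A C a b : ℝ} (ha : 0 < a) (hab : a ≤ b) (hA : A ≤ a + C) :
    A / a + Real.log a - C / a ≤ A / b + Real.log b - C / b := by
  have hb : 0 < b := ha.trans_le hab
  have hlog : Real.log a - Real.log b ≤ a / b - 1 := by
    rw [← Real.log_div ha.ne' hb.ne']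
    exact Real.log_le_sub_one_of_pos (div_pos ha hb)
  have hmul : A * (1 / a - 1 / b) ≤ (a + C) * (1 / a - 1 / b) :=
    mul_le_mul_of_nonneg_right hA (sub_nonneg.2 (one_div_le_one_div_of_le ha hab))
  have hexpand : (a + C) * (1 / a - 1 / b) = 1 - a / b + C / a - C / b := by
    field_simp
    ring
  linear_combination hlog + hmul + hexpand

theorem sum_Icc_two_le_log_log_add {a : ℕ → ℝ} {C : ℝ}
    (ha : ∀ n ≥ 2, ∑ i ∈ Icc 2 n, a i * Real.log i ≤ Real.log n + C) {n : ℕ} (hn : 2 ≤ n) :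
    ∑ i ∈ Icc 2 n, a i ≤
      Real.log (Real.log n) + (1 + C / Real.log 2 - Real.log (Real.log 2)) := by
  have hlog {m : ℕ} (hm : 2 ≤ m) : 0 < Real.log m := Real.log_pos (mod_cast hm)
  have hsum : ∑ i ∈ Icc 2 n, a i ≤ (∑ i ∈ Icc 2 n, a i * Real.log i) / Real.log n +
      Real.log (Real.log n) - C / Real.log n + (C / Real.log 2 - Real.log (Real.log 2)) := by
    induction n, hn using Nat.le_induction with
    | base =>
      have := (hlog le_rfl).ne'
      simp only [Icc_self, sum_singleton, Nat.cast_ofNat] at this ⊢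
      rw [mul_div_cancel_right₀ _ this]
      linarith
    | succ n hn ih =>
      have hmono := div_add_log_sub_div_le (hlog hn)
        (Real.log_le_log (by positivity) (Nat.cast_le.2 n.le_succ)) (ha n hn)
      rw [sum_Icc_succ_top (by lia), sum_Icc_succ_top (by lia), add_div,
        mul_div_cancel_right₀ _ (hlog (by lia)).ne']
      linarith
  have hquot : (∑ i ∈ Icc 2 n, a i * Real.log i) / Real.log n ≤ 1 + C / Real.log n := by
    rw [← div_self (hlog hn).ne', ← add_div]
    exact div_le_div_of_nonneg_right (ha n hn) (hlog hn).le
  linarith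

theorem exists_forall_sum_primesLE_inv_le :
    ∃ C : ℝ, ∀ n ≥ 2, ∑ p ∈ primesLE n, (p : ℝ)⁻¹ ≤ Real.log (Real.log n) + C := by
  refine ⟨1 + Real.log 4 / Real.log 2 - Real.log (Real.log 2), fun n hn ↦ ?_⟩
  rw [Nat.primesLE_eq_filter_Icc_two, sum_filter]
  refine sum_Icc_two_le_log_log_add (C := Real.log 4) (fun m hm ↦ ?_) hn
  simpa only [Nat.primesLE_eq_filter_Icc_two, sum_filter, ite_mul, zero_mul] using
    sum_primesLE_inv_mul_log_le (n := m) (by lia)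

theorem exists_pos_forall_mul_log_rpow_le_prod_exp {K T : ℝ} (hK : 0 ≤ K) (hT : 0 ≤ T) :
    ∃ c : ℝ, 0 < c ∧ ∀ Y : ℝ, 2 ≤ Y →
      c * Real.log Y ^ (-K) ≤ ∏ p ∈ primesLE ⌊Y⌋₊, Real.exp (-(K / p + T / p ^ 2)) := by
  obtain ⟨C, hC⟩ := exists_forall_sum_primesLE_inv_le
  have hsummable : Summable fun n : ℕ ↦ ((n : ℝ) ^ 2)⁻¹ := Real.summable_nat_pow_inv.2 one_lt_two
  refine ⟨Real.exp (-(K * C + T * ∑' n : ℕ, ((n : ℝ) ^ 2)⁻¹)), Real.exp_pos _, fun Y hY ↦ ?_⟩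
  have hfloor : 2 ≤ ⌊Y⌋₊ := Nat.le_floor (mod_cast hY)
  have hlog : Real.log (Real.log ⌊Y⌋₊) ≤ Real.log (Real.log Y) :=
    Real.log_le_log (Real.log_pos (mod_cast hfloor))
      (Real.log_le_log (by positivity) (Nat.floor_le (by linarith)))
  have hinv : K * ∑ p ∈ primesLE ⌊Y⌋₊, (p : ℝ)⁻¹ ≤ K * (Real.log (Real.log Y) + C) := by
    gcongr
    exact (hC _ hfloor).trans (by gcongr)
  have hinvSq : T * ∑ p ∈ primesLE ⌊Y⌋₊, ((p : ℝ) ^ 2)⁻¹ ≤ T * ∑' n : ℕ, ((n : ℝ) ^ 2)⁻¹ := by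
    gcongr
    exact hsummable.sum_le_tsum _ fun _ _ ↦ by positivity
  rw [← Real.exp_sum, Real.rpow_def_of_pos (Real.log_pos (by linarith)), ← Real.exp_add,
    Real.exp_le_exp]
  simp only [sum_neg_distrib, sum_add_distrib, div_eq_mul_inv, ← mul_sum]
  linarith

end Mertens

section LocalFactor

/-- The factor `1 - j(g;p) / p ^ γ(g;p)` contributed by the prime `p` to `wProd g Y`. -/
noncomputable def localFactor (g : ℤ[X]) (p : ℕ) : ℝ :=
  1 - (jCount g p : ℝ) / (p : ℝ) ^ gammaExp g p

theorem wProd_eq_prod_localFactor (g : ℤ[X]) (Y : ℝ) :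
    wProd g Y = ∏ p ∈ Nat.primesLE ⌊Y⌋₊, localFactor g p := by
  simp only [wProd, localFactor, Nat.primesLE_eq_filter_range]

-- In `jCount` the ascription `(s : ℤ)` coerces the whole range to a `Finset ℤ` before filtering.
open Classical in
theorem jCount_eq_card_filter_range (g : ℤ[X]) (p : ℕ) :
    jCount g p = ((Finset.range (p ^ gammaExp g p)).filter fun s : ℕ ↦
      (p : ℤ) ^ gammaExp g p ∣ (derivative g).eval (s : ℤ)).card := by
  rw [← Finset.card_map (Nat.castEmbedding : ℕ ↪ ℤ), jCount]
  congr 1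
  ext x
  simp only [Finset.bind_def, Finset.pure_def, Finset.mem_filter, Finset.mem_sup, Finset.mem_map,
    Finset.mem_singleton, Nat.castEmbedding_apply]
  constructor
  · rintro ⟨⟨s, hs, rfl⟩, hdvd⟩
    exact ⟨s, ⟨hs, hdvd⟩, rfl⟩
  · rintro ⟨s, ⟨hs, hdvd⟩, rfl⟩
    exact ⟨⟨s, hs, rfl⟩, hdvd⟩

variable {g : ℤ[X]} {p : ℕ}

theorem gammaExp_le {c : ℕ} {n : ℤ} (hn : ¬(p : ℤ) ^ c ∣ (derivative g).eval n) :
    gammaExp g p ≤ c :=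
  Nat.sInf_le ⟨Nat.pos_of_ne_zero fun hc ↦ hn (by simp [hc]), fun hall ↦ hn (hall n)⟩

theorem gammaExp_spec {c : ℕ} {n : ℤ} (hn : ¬(p : ℤ) ^ c ∣ (derivative g).eval n) :
    0 < gammaExp g p ∧ ∃ m : ℤ, ¬(p : ℤ) ^ gammaExp g p ∣ (derivative g).eval m := by
  have hmem : c ∈ {c : ℕ | 0 < c ∧ ¬∀ n : ℤ, (p : ℤ) ^ c ∣ (derivative g).eval n} :=
    ⟨Nat.pos_of_ne_zero fun hc ↦ hn (by simp [hc]), fun hall ↦ hn (hall n)⟩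
  exact (Nat.sInf_mem ⟨c, hmem⟩).imp_right not_forall.1

theorem jCount_lt_pow_gammaExp (hp : 0 < p) {n : ℤ}
    (hn : ¬(p : ℤ) ^ gammaExp g p ∣ (derivative g).eval n) : jCount g p < p ^ gammaExp g p := by
  classical
  set q := p ^ gammaExp g p with hq
  have hq0 : (0 : ℤ) < q := by positivity
  have hqp : (p : ℤ) ^ gammaExp g p = q := by simp [hq]
  obtain ⟨s, hs⟩ := Int.eq_ofNat_of_zero_le (Int.emod_nonneg n hq0.ne')
  have hsub : (q : ℤ) ∣ (derivative g).eval n - (derivative g).eval (s : ℤ) := by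
    rw [← hs]
    exact Int.dvd_self_sub_emod.trans (sub_dvd_eval_sub _ _ _)
  rw [jCount_eq_card_filter_range, ← hq, hqp]
  conv_rhs => rw [← Finset.card_range q]
  refine Finset.card_lt_card (Finset.filter_ssubset.2 ⟨s, ?_, fun hs' ↦ hn ?_⟩)
  · have := Int.emod_lt_of_pos n hq0
    simpa [hs] using this
  · rwa [hqp, dvd_iff_dvd_of_dvd_sub hsub]

theorem inv_pow_le_localFactor (hp : 0 < p) {c : ℕ} {n : ℤ}
    (hn : ¬(p : ℤ) ^ c ∣ (derivative g).eval n) : ((p : ℝ) ^ c)⁻¹ ≤ localFactor g p := by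
  obtain ⟨-, m, hm⟩ := gammaExp_spec hn
  have hle : gammaExp g p ≤ c := gammaExp_le hn
  have hp1 : (1 : ℝ) ≤ p := mod_cast hp
  have hpow : (0 : ℝ) < (p : ℝ) ^ gammaExp g p := by positivity
  have hj : (jCount g p : ℝ) + 1 ≤ (p : ℝ) ^ gammaExp g p :=
    mod_cast jCount_lt_pow_gammaExp hp hm
  calc ((p : ℝ) ^ c)⁻¹ ≤ ((p : ℝ) ^ gammaExp g p)⁻¹ := by gcongr
    _ ≤ localFactor g p := by
      rw [localFactor, le_sub_iff_add_le, ← one_div, ← add_div, div_le_one hpow]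
      linarith

theorem exists_not_pow_dvd_eval (hp : 1 < p) {f : ℤ[X]} {K : ℕ} {N : ℤ} (hK : f.natDegree ≤ K)
    (hN : N ≠ 0) (hf : f.content ∣ N) :
    ∃ n : ℤ, ¬(p : ℤ) ^ (K.superFactorial * N.natAbs) ∣ f.eval n := by
  by_contra! hall
  set M := K.superFactorial * N.natAbs
  have hdvd : p ^ M ∣ M := by
    have := (dvd_superFactorial_mul_content hK fun n ↦ hall n).trans (mul_dvd_mul_left _ hf)
    simpa [Int.natAbs_mul, Int.natAbs_pow] using Int.natAbs_dvd_natAbs.2 this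
  have hM0 : 0 < M := Nat.mul_pos (superFactorial_pos K) (Int.natAbs_pos.2 hN)
  exact (Nat.lt_pow_self hp).not_ge (Nat.le_of_dvd hM0 hdvd)

theorem card_filter_range_dvd_eval_le_natDegree (hp : p.Prime) {f : ℤ[X]}
    (hf : ¬(p : ℤ) ∣ f.content) :
    ((Finset.range p).filter fun s : ℕ ↦ (p : ℤ) ∣ f.eval (s : ℤ)).card ≤ f.natDegree := by
  have : Fact p.Prime := ⟨hp⟩
  set f' := f.map (Int.castRingHom (ZMod p))
  have hf' : f' ≠ 0 := by
    contrapose! hf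
    rw [dvd_content_iff_C_dvd, C_dvd_iff_dvd_coeff]
    intro i
    rw [← ZMod.intCast_zmod_eq_zero_iff_dvd, ← eq_intCast (Int.castRingHom (ZMod p)), ← coeff_map]
    simp [← show f' = f.map _ from rfl, hf]
  calc _ ≤ f'.roots.toFinset.card := by
        refine Finset.card_le_card_of_injOn (Nat.cast : ℕ → ZMod p) (fun s hs ↦ ?_) ?_
        · have hdvd := (Finset.mem_filter.1 hs).2
          rw [Finset.mem_coe, Multiset.mem_toFinset, mem_roots hf', IsRoot.def, ← Int.cast_natCast,
            eval_intCast_map, eq_intCast]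
          exact (ZMod.intCast_zmod_eq_zero_iff_dvd _ _).2 hdvd
        · intro s hs t ht hst
          have hs := Finset.mem_range.1 (Finset.mem_filter.1 hs).1
          have ht := Finset.mem_range.1 (Finset.mem_filter.1 ht).1
          exact ((ZMod.natCast_eq_natCast_iff _ _ _).1 hst).eq_of_lt_of_lt hs ht
    _ ≤ f'.natDegree := (Multiset.toFinset_card_le _).trans (card_roots' f')
    _ ≤ f.natDegree := natDegree_map_le

theorem one_sub_div_le_localFactor (hp : p.Prime) (hcont : ¬(p : ℤ) ∣ (derivative g).content)
    (hdeg : (derivative g).natDegree < p) :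
    1 - ((derivative g).natDegree : ℝ) / p ≤ localFactor g p := by
  classical
  have hcard := card_filter_range_dvd_eval_le_natDegree hp hcont
  obtain ⟨s, hs⟩ : ∃ s : ℕ, ¬(p : ℤ) ^ 1 ∣ (derivative g).eval (s : ℤ) := by
    by_contra! hall
    simp only [pow_one] at hall
    simp only [hall, Finset.filter_true, Finset.card_range] at hcard
    exact hcard.not_gt hdeg
  have hγ : gammaExp g p = 1 := le_antisymm (gammaExp_le hs) (gammaExp_spec hs).1
  have hj : jCount g p ≤ (derivative g).natDegree := by
    simpa only [jCount_eq_card_filter_range, hγ, pow_one] using hcard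
  rw [localFactor, hγ, pow_one]
  gcongr

theorem exp_neg_add_le_one_sub {x : ℝ} (hx : x ≤ 1 / 2) :
    Real.exp (-(x + 2 * x ^ 2)) ≤ 1 - x := by
  have hpos : 0 < 1 - x := by linarith
  rw [Real.exp_neg, inv_le_comm₀ (Real.exp_pos _) hpos]
  calc (1 - x)⁻¹ ≤ x + 2 * x ^ 2 + 1 := by
        rw [inv_le_iff_one_le_mul₀ hpos]
        nlinarith [mul_nonneg (sq_nonneg x) (sub_nonneg.2 hx)]
    _ ≤ Real.exp (x + 2 * x ^ 2) := Real.add_one_le_exp _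

theorem exp_neg_mul_le_localFactor (hp : p.Prime) {K : ℕ} {N : ℤ} (hN : N ≠ 0)
    (hK : (derivative g).natDegree ≤ K) (hcont : (derivative g).content ∣ N) :
    Real.exp (-((K.superFactorial * N.natAbs : ℕ) * p)) ≤ localFactor g p := by
  obtain ⟨n, hn⟩ := exists_not_pow_dvd_eval hp.one_lt hK hN hcont
  refine le_trans ?_ (inv_pow_le_localFactor hp.pos hn)
  have hp0 : (0 : ℝ) < p := mod_cast hp.pos
  rw [Real.exp_neg, Real.exp_nat_mul]
  gcongr
  linarith [Real.add_one_le_exp (p : ℝ)]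

theorem exp_neg_add_le_localFactor (hp : p.Prime) (hcont : ¬(p : ℤ) ∣ (derivative g).content)
    {K : ℕ} (hK : (derivative g).natDegree ≤ K) (hKp : 2 * K ≤ p) :
    Real.exp (-(K / p + 2 * (K / p : ℝ) ^ 2)) ≤ localFactor g p := by
  have hp0 : (0 : ℝ) < p := mod_cast hp.pos
  have hhalf : (K : ℝ) / p ≤ 1 / 2 := by
    rw [div_le_div_iff₀ hp0 two_pos]
    exact_mod_cast (by lia : K * 2 ≤ 1 * p)
  have hdeg : (derivative g).natDegree < p := by have := hp.pos; lia
  calc Real.exp (-(K / p + 2 * (K / p) ^ 2)) ≤ 1 - K / p := exp_neg_add_le_one_sub hhalf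
    _ ≤ 1 - ((derivative g).natDegree : ℝ) / p := by gcongr
    _ ≤ localFactor g p := one_sub_div_le_localFactor hp hcont hdeg

theorem exists_forall_exp_neg_le_localFactor (K : ℕ) {N : ℤ} (hN : N ≠ 0) :
    ∃ T : ℝ, 0 ≤ T ∧ ∀ (g : ℤ[X]) (p : ℕ), p.Prime → (derivative g).natDegree ≤ K →
      (derivative g).content ∣ N → Real.exp (-(K / p + T / p ^ 2)) ≤ localFactor g p := by
  set M : ℕ := K.superFactorial * N.natAbs
  set B : ℕ := 2 * K + N.natAbs
  refine ⟨2 * K ^ 2 + M * B ^ 3, by positivity, fun g p hp hK hcont ↦ ?_⟩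
  have hp0 : (0 : ℝ) < p := mod_cast hp.pos
  obtain hpB | hpB := le_or_gt p B
  · refine le_trans ?_ (exp_neg_mul_le_localFactor hp hN hK hcont)
    rw [Real.exp_le_exp, neg_le_neg_iff]
    calc (M * p : ℝ) = M * p ^ 3 / p ^ 2 := by field_simp
      _ ≤ M * B ^ 3 / p ^ 2 := by gcongr
      _ ≤ (2 * K ^ 2 + M * B ^ 3) / p ^ 2 := by
        gcongr
        exact le_add_of_nonneg_left (by positivity)
      _ ≤ K / p + (2 * K ^ 2 + M * B ^ 3) / p ^ 2 := le_add_of_nonneg_left (by positivity)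
  · have hcont' : ¬(p : ℤ) ∣ (derivative g).content := fun hdvd ↦ by
      have := Nat.le_of_dvd (Int.natAbs_pos.2 hN) (Int.natCast_dvd.1 (hdvd.trans hcont))
      lia
    refine le_trans ?_ (exp_neg_add_le_localFactor hp hcont' hK (by lia))
    rw [div_pow, ← mul_div_assoc]
    gcongr
    exact le_add_of_nonneg_right (by positivity)

theorem exists_pos_forall_mul_log_rpow_le_wProd (K : ℕ) {N : ℤ} (hN : N ≠ 0) :
    ∃ c : ℝ, 0 < c ∧ ∀ g : ℤ[X], (derivative g).natDegree ≤ K → (derivative g).content ∣ N →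
      ∀ Y : ℝ, 2 ≤ Y → c * Real.log Y ^ (-(K : ℝ)) ≤ wProd g Y := by
  obtain ⟨T, hT, hfactor⟩ := exists_forall_exp_neg_le_localFactor K hN
  obtain ⟨c, hc, hprod⟩ := exists_pos_forall_mul_log_rpow_le_prod_exp K.cast_nonneg hT
  refine ⟨c, hc, fun g hK hcont Y hY ↦ (hprod Y hY).trans ?_⟩
  rw [wProd_eq_prod_localFactor]
  exact Finset.prod_le_prod (fun p _ ↦ (Real.exp_pos _).le) fun p hp ↦
    hfactor g p (Nat.prime_of_mem_primesLE hp) hK hcont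

end LocalFactor

/-- Proposition 3.5: `w_d(Y) ≫_h (log Y)^{1-k}`. -/
theorem stmt7
    (k : ℕ) (hk : 0 < k)
    (h : Polynomial ℤ) (hdeg : h.natDegree = k) (hlead : 0 < h.leadingCoeff)
    (hint : ∀ q : ℕ, 0 < q → ∃ n : ℤ, (q : ℤ) ∣ h.eval n)
    (z : ∀ (p : ℕ) [Fact p.Prime], ℤ_[p])
    (hz : ∀ (p : ℕ) [Fact p.Prime], Polynomial.aeval (z p) h = 0)
    (lam : ℕ → ℕ) (hlam1 : lam 1 = 1)
    (hlamMul : ∀ a b : ℕ, lam (a * b) = lam a * lam b)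
    (hlamP : ∀ (p : ℕ) [Fact p.Prime],
      lam p = p ^ Polynomial.rootMultiplicity (z p) (h.map (algebraMap ℤ ℤ_[p])))
    (r : ℕ → ℤ)
    (hr : ∀ d : ℕ, 0 < d → -(d : ℤ) < r d ∧ r d ≤ 0)
    (hrz : ∀ d : ℕ, 0 < d → ∀ (p : ℕ) [Fact p.Prime], ∀ α : ℕ, p ^ α ∣ d →
      (p : ℤ_[p]) ^ α ∣ (z p - (r d : ℤ_[p])))
    (H : ℕ → Polynomial ℤ)
    (hH : ∀ d : ℕ, 0 < d →
      Polynomial.C (lam d : ℤ) * H d =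
        h.comp (Polynomial.C (r d) + Polynomial.C (d : ℤ) * Polynomial.X))
    :
    ∃ c : ℝ, 0 < c ∧ ∀ d : ℕ, 0 < d → ∀ Y : ℝ, 2 ≤ Y →
      c * Real.log Y ^ ((1 : ℝ) - (k : ℝ)) ≤ wProd (H d) Y := by
  have hh : h.natDegree ≠ 0 := hdeg ▸ hk.ne'
  have hh' : derivative h ≠ 0 := mt derivative_eq_zero.1 hh
  obtain ⟨N, hN, hcontent⟩ := exists_ne_zero_forall_content_derivative_dvd hh'
  obtain ⟨c, hc, hbound⟩ := exists_pos_forall_mul_log_rpow_le_wProd (k - 1) hN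
  refine ⟨c, hc, fun d hd Y hY ↦ ?_⟩
  have hdeg_deriv : (derivative (H d)).natDegree ≤ k - 1 := by
    rw [← hdeg, ← natDegree_eq_of_C_mul_eq_comp hh (mod_cast hd.ne') (hH d hd)]
    exact natDegree_derivative_le _
  have hcontent_d : (derivative (H d)).content ∣ N :=
    hcontent z ⟨⟨lam, hlam1⟩, hlamMul⟩ d (r d) (H d) hz hlamP hd.ne' (hrz d hd) (hH d hd)
  have hexp : (1 : ℝ) - k = -((k - 1 : ℕ) : ℝ) := by rw [Nat.cast_pred hk, neg_sub]
  rw [hexp]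
  exact hbound (H d) hdeg_deriv hcontent_d Y hY
end

section
/- For every positive integer k and every finite set S of integers ≥ 2 there exist constants c, C > 0 with the following property: for every g ∈ ℤ[x] of degree k whose derivative g' is not the zero polynomial and such that every integer q ≥ 2 modulo which g' vanishes identically belongs to S, and for all reals X, Y ≥ 2 with c·log X ≥ log Y · log log Y, one has | #({1,…,⌊X⌋} ∩ W(g;Y)) − X·∏_{p ≤ Y}(1 − j(g;p)/p^{γ(g;p)}) | ≤ C·X·e^{−c·(log X)/(log Y)}, the product being over primes p ≤ Y. -/
/-!
Let `κ` bound all the local counts `j(g;p)`. Inclusion–exclusion over the primes `p ≤ Y`, truncated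
at level `r`, has an error controlled by the `r`-th elementary symmetric function of the local
densities (Bonferroni). The terms of level at most `r` have a total remainder of size about
`(κ Y) ^ r`, because the Chinese remainder theorem gives the count for each set of primes up to the
product of their `j(g;p)`. Mertens' upper bound for `∑ 1 / p` and Rankin's trick bound the `r`-th
symmetric function by `exp (O(κ log log Y) - 2 r)`. Writing `u = log X / log Y`, the level
`r = ⌊u / (4 κ)⌋` makes the remainder at most about `X ^ (1 / 2)` and the tail `O(exp (-c u))` as
soon as `log log Y ≤ c u` with `128 κ ^ 2 c ≤ 1`.

The bound `κ = k + M ^ 2`, where `M` bounds the moduli at which `g'` vanishes identically, is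
uniform in `g`: if `γ(g;p) = 1`, then `j(g;p)` counts roots of a nonzero polynomial over `ℤ/p`, and
otherwise `p ^ γ ≤ (p ^ (γ - 1)) ^ 2 ≤ M ^ 2`.
-/

section ElementarySymmetric

open Finset

variable {ι : Type*} {s : Finset ι}

lemma sum_powersetCard_succ_insert_prod [DecidableEq ι] {R : Type*} [CommSemiring R] {a : ι}
    (ha : a ∉ s) (x : ι → R) (r : ℕ) :
    ∑ T ∈ powersetCard (r + 1) (insert a s), ∏ i ∈ T, x i =
      ∑ T ∈ powersetCard (r + 1) s, ∏ i ∈ T, x i +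
        x a * ∑ T ∈ powersetCard r s, ∏ i ∈ T, x i := by
  have not_mem {d : ℕ} {T : Finset ι} (hT : T ∈ powersetCard d s) : a ∉ T :=
    fun h => ha ((mem_powersetCard.1 hT).1 h)
  have disjoint_image :
      Disjoint (powersetCard (r + 1) s) ((powersetCard r s).image (insert a)) := by
    refine disjoint_left.2 fun T hT hT' => not_mem hT ?_
    obtain ⟨U, -, rfl⟩ := mem_image.1 hT'
    exact mem_insert_self a U
  have injOn_insert : Set.InjOn (insert a) (powersetCard r s : Set (Finset ι)) :=
    fun T hT U hU h => by
      rw [← erase_insert (not_mem hT), h, erase_insert (not_mem hU)]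
  rw [powersetCard_succ_insert ha, sum_union disjoint_image, sum_image injOn_insert, mul_sum]
  exact congrArg _ (sum_congr rfl fun T hT => prod_insert (not_mem hT))

lemma alternatingSum_powersetCard_insert_prod [DecidableEq ι] {R : Type*} [CommRing R] {a : ι}
    (ha : a ∉ s) (x : ι → R) (r : ℕ) :
    ∑ d ∈ range (r + 1), (-1) ^ d * ∑ T ∈ powersetCard d (insert a s), ∏ i ∈ T, x i =
      ∑ d ∈ range (r + 1), (-1) ^ d * ∑ T ∈ powersetCard d s, ∏ i ∈ T, x i -
        x a * ∑ d ∈ range r, (-1) ^ d * ∑ T ∈ powersetCard d s, ∏ i ∈ T, x i := by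
  rw [sum_range_succ', sum_range_succ' (n := r), mul_sum (range r), add_sub_right_comm,
    ← sum_sub_distrib]
  simp only [powersetCard_zero, sum_powersetCard_succ_insert_prod ha]
  exact congrArg (· + _) (sum_congr rfl fun d _ => by ring)

theorem abs_prod_one_sub_sub_alternatingSum_le {R : Type*} [CommRing R] [LinearOrder R]
    [IsStrictOrderedRing R] {x : ι → R} (hx₀ : ∀ i ∈ s, 0 ≤ x i) (hx₁ : ∀ i ∈ s, x i ≤ 1) (r : ℕ) :
    |∏ i ∈ s, (1 - x i) - ∑ d ∈ range r, (-1) ^ d * ∑ T ∈ powersetCard d s, ∏ i ∈ T, x i| ≤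
      ∑ T ∈ powersetCard r s, ∏ i ∈ T, x i := by
  classical
  induction s using Finset.induction_on generalizing r with
  | empty =>
    cases r with
    | zero => simp
    | succ r =>
      have powersetCard_succ_empty (d : ℕ) : powersetCard (d + 1) (∅ : Finset ι) = ∅ :=
        powersetCard_eq_empty.2 (by simp)
      simp [sum_range_succ', powersetCard_succ_empty]
  | insert a s ha ih =>
    rw [forall_mem_insert] at hx₀ hx₁
    cases r with
    | zero =>
      have factor_le_one : ∀ i ∈ insert a s, |1 - x i| ≤ 1 := by
        simp only [forall_mem_insert, abs_le]
        exact ⟨⟨by linarith, by linarith⟩, fun i hi =>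
          ⟨by linarith [hx₁.2 i hi], by linarith [hx₀.2 i hi]⟩⟩
      simpa [abs_prod] using prod_le_one (fun i _ => abs_nonneg (1 - x i)) factor_le_one
    | succ r =>
      set P := ∏ i ∈ s, (1 - x i)
      set e : ℕ → R := fun d => ∑ T ∈ powersetCard d s, ∏ i ∈ T, x i
      set S : ℕ → R := fun n => ∑ d ∈ range n, (-1) ^ d * e d
      rw [alternatingSum_powersetCard_insert_prod ha, sum_powersetCard_succ_insert_prod ha,
        prod_insert ha]
      calc |(1 - x a) * P - (S (r + 1) - x a * S r)|
          = |(P - S (r + 1)) - x a * (P - S r)| := by ring_nf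
        _ ≤ |P - S (r + 1)| + |x a * (P - S r)| := abs_sub _ _
        _ ≤ e (r + 1) + x a * e r := by
          rw [abs_mul, abs_of_nonneg hx₀.1]
          gcongr
          · exact ih hx₀.2 hx₁.2 (r + 1)
          · exact hx₀.1
          · exact ih hx₀.2 hx₁.2 r

lemma sum_powersetCard_prod_nonneg {R : Type*} [CommSemiring R] [PartialOrder R] [IsOrderedRing R]
    {x : ι → R} (hx : ∀ i ∈ s, 0 ≤ x i) (r : ℕ) : 0 ≤ ∑ T ∈ powersetCard r s, ∏ i ∈ T, x i :=
  sum_nonneg fun _ hT => prod_nonneg fun i hi => hx i ((mem_powersetCard.1 hT).1 hi)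

theorem sum_pow_mul_sum_powersetCard_prod_le_exp {x : ι → ℝ} (hx : ∀ i ∈ s, 0 ≤ x i) {z : ℝ}
    (hz : 0 ≤ z) (n : ℕ) :
    ∑ d ∈ range n, z ^ d * ∑ T ∈ powersetCard d s, ∏ i ∈ T, x i ≤ Real.exp (z * ∑ i ∈ s, x i) := by
  classical
  have zx_nonneg : ∀ i ∈ s, 0 ≤ z * x i := fun i hi => mul_nonneg hz (hx i hi)
  calc ∑ d ∈ range n, z ^ d * ∑ T ∈ powersetCard d s, ∏ i ∈ T, x i
      = ∑ d ∈ range n, ∑ T ∈ powersetCard d s, ∏ i ∈ T, z * x i := by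
        refine sum_congr rfl fun d _ => ?_
        rw [mul_sum]
        refine sum_congr rfl fun T hT => ?_
        rw [prod_mul_distrib, prod_const, (mem_powersetCard.1 hT).2]
    _ = ∑ T ∈ (range n).biUnion (powersetCard · s), ∏ i ∈ T, z * x i :=
        (sum_biUnion ((pairwise_disjoint_powersetCard s).set_pairwise _)).symm
    _ ≤ ∑ T ∈ s.powerset, ∏ i ∈ T, z * x i := by
        refine sum_le_sum_of_subset_of_nonneg ?_ fun T hT _ =>
          prod_nonneg fun i hi => zx_nonneg i (mem_powerset.1 hT hi)
        exact biUnion_subset.2 fun d _ => by grind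
    _ = ∏ i ∈ s, (1 + z * x i) := (prod_one_add s).symm
    _ ≤ ∏ i ∈ s, Real.exp (z * x i) :=
        prod_le_prod (fun i hi => by linarith [zx_nonneg i hi]) fun i _ => by
          linarith [Real.add_one_le_exp (z * x i)]
    _ = Real.exp (z * ∑ i ∈ s, x i) := by rw [← Real.exp_sum, mul_sum]

lemma sum_powersetCard_prod_le_exp {x : ι → ℝ} (hx : ∀ i ∈ s, 0 ≤ x i) (t : ℝ) (r : ℕ) :
    ∑ T ∈ powersetCard r s, ∏ i ∈ T, x i ≤ Real.exp (Real.exp t * ∑ i ∈ s, x i - r * t) := by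
  have rankin := sum_pow_mul_sum_powersetCard_prod_le_exp hx (Real.exp_pos t).le (r + 1)
  have term_le : Real.exp t ^ r * ∑ T ∈ powersetCard r s, ∏ i ∈ T, x i ≤
      Real.exp (Real.exp t * ∑ i ∈ s, x i) := by
    refine (single_le_sum (f := fun d => Real.exp t ^ d * ∑ T ∈ powersetCard d s, ∏ i ∈ T, x i)
      (fun d _ => ?_) (self_mem_range_succ r)).trans rankin
    exact mul_nonneg (by positivity) (sum_powersetCard_prod_nonneg hx d)
  rw [Real.exp_sub, le_div_iff₀ (Real.exp_pos _), Real.exp_nat_mul, mul_comm]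
  exact term_le

lemma sum_range_succ_sum_powersetCard_prod_le {x : ι → ℝ} (hx : ∀ i ∈ s, 0 ≤ x i) {w : ℝ}
    (hw : 1 ≤ w) (hxw : ∑ i ∈ s, x i ≤ w) (r : ℕ) :
    ∑ d ∈ range (r + 1), ∑ T ∈ powersetCard d s, ∏ i ∈ T, x i ≤ Real.exp 1 * w ^ r := by
  have hw₀ : 0 < w := one_pos.trans_le hw
  calc ∑ d ∈ range (r + 1), ∑ T ∈ powersetCard d s, ∏ i ∈ T, x i
      ≤ ∑ d ∈ range (r + 1), w ^ r * (w⁻¹ ^ d * ∑ T ∈ powersetCard d s, ∏ i ∈ T, x i) := by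
        refine sum_le_sum fun d hd => ?_
        rw [← mul_assoc]
        refine le_mul_of_one_le_left (sum_powersetCard_prod_nonneg hx d) ?_
        rw [inv_pow, ← div_eq_mul_inv, one_le_div (by positivity)]
        exact pow_le_pow_right₀ hw (mem_range_succ_iff.1 hd)
    _ ≤ w ^ r * Real.exp (w⁻¹ * ∑ i ∈ s, x i) := by
        rw [← mul_sum]
        gcongr
        exact sum_pow_mul_sum_powersetCard_prod_le_exp hx (by positivity) _
    _ ≤ Real.exp 1 * w ^ r := by
        rw [mul_comm]
        gcongr
        rwa [inv_mul_le_one₀ hw₀]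

end ElementarySymmetric

section BrunPureSieve

open Finset

variable {α ι : Type*}

theorem abs_card_filter_forall_not_sub_alternatingSum_le (A : Finset α) (B : ι → α → Prop)
    [∀ i, DecidablePred (B i)] (s : Finset ι) (r : ℕ) :
    |(#{n ∈ A | ∀ i ∈ s, ¬ B i n} : ℝ) -
        ∑ d ∈ range r, (-1) ^ d * ∑ T ∈ powersetCard d s, (#{n ∈ A | ∀ i ∈ T, B i n} : ℝ)| ≤
      ∑ T ∈ powersetCard r s, (#{n ∈ A | ∀ i ∈ T, B i n} : ℝ) := by
  set χ : α → ι → ℝ := fun n i => if B i n then 1 else 0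
  have card_eq_sum (T : Finset ι) :
      (#{n ∈ A | ∀ i ∈ T, B i n} : ℝ) = ∑ n ∈ A, ∏ i ∈ T, χ n i := by
    rw [← sum_boole]
    exact sum_congr rfl fun n _ => by simp [χ, prod_ite_zero]
  have card_not_eq_sum :
      (#{n ∈ A | ∀ i ∈ s, ¬ B i n} : ℝ) = ∑ n ∈ A, ∏ i ∈ s, (1 - χ n i) := by
    have one_sub_χ (n : α) (i : ι) : 1 - χ n i = if ¬ B i n then 1 else 0 := by
      by_cases h : B i n <;> simp [χ, h]
    rw [← sum_boole]
    exact sum_congr rfl fun n _ => by simp only [one_sub_χ, prod_ite_zero, prod_const_one]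
  have sum_card_eq (d : ℕ) : ∑ T ∈ powersetCard d s, (#{n ∈ A | ∀ i ∈ T, B i n} : ℝ) =
      ∑ n ∈ A, ∑ T ∈ powersetCard d s, ∏ i ∈ T, χ n i := by
    rw [sum_comm]
    exact sum_congr rfl fun T _ => card_eq_sum T
  simp only [card_not_eq_sum, sum_card_eq, mul_sum]
  rw [sum_comm (s := range r), ← sum_sub_distrib]
  refine (abs_sum_le_sum_abs _ _).trans (sum_le_sum fun n _ => ?_)
  simp only [← mul_sum]
  refine abs_prod_one_sub_sub_alternatingSum_le (fun i _ => ?_) (fun i _ => ?_) r <;>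
    by_cases h : B i n <;> simp [χ, h]

/-- Bonferroni's inequality is applied twice: to the sifted set, and, with the same truncation, to
the product of local densities. -/
theorem abs_card_filter_forall_not_sub_mul_prod_le {A : Finset α} {B : ι → α → Prop}
    [∀ i, DecidablePred (B i)] {s : Finset ι} {X : ℝ} (hX : 0 ≤ X) {x : ι → ℝ}
    (hx₀ : ∀ i ∈ s, 0 ≤ x i) (hx₁ : ∀ i ∈ s, x i ≤ 1) {E : Finset ι → ℝ}
    (hE : ∀ T ⊆ s, |(#{n ∈ A | ∀ i ∈ T, B i n} : ℝ) - X * ∏ i ∈ T, x i| ≤ E T) (r : ℕ) :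
    |(#{n ∈ A | ∀ i ∈ s, ¬ B i n} : ℝ) - X * ∏ i ∈ s, (1 - x i)| ≤
      2 * X * ∑ T ∈ powersetCard r s, ∏ i ∈ T, x i +
        ∑ d ∈ range (r + 1), ∑ T ∈ powersetCard d s, E T := by
  set a : ℕ → ℝ := fun d => ∑ T ∈ powersetCard d s, (#{n ∈ A | ∀ i ∈ T, B i n} : ℝ)
  set e : ℕ → ℝ := fun d => ∑ T ∈ powersetCard d s, ∏ i ∈ T, x i
  have level_error (d : ℕ) : |a d - X * e d| ≤ ∑ T ∈ powersetCard d s, E T := by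
    rw [mul_sum, ← sum_sub_distrib]
    exact (abs_sum_le_sum_abs _ _).trans
      (sum_le_sum fun T hT => hE T (mem_powersetCard.1 hT).1)
  have truncation_error :
      |∑ d ∈ range r, (-1) ^ d * a d - X * ∑ d ∈ range r, (-1) ^ d * e d| ≤
        ∑ d ∈ range r, ∑ T ∈ powersetCard d s, E T := by
    rw [mul_sum, ← sum_sub_distrib]
    refine (abs_sum_le_sum_abs _ _).trans (sum_le_sum fun d _ => ?_)
    rw [mul_left_comm, ← mul_sub, abs_mul, abs_neg_one_pow, one_mul]
    exact level_error d
  have sifted_error := abs_card_filter_forall_not_sub_alternatingSum_le A B s r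
  have density_error : |X * ∏ i ∈ s, (1 - x i) - X * ∑ d ∈ range r, (-1) ^ d * e d| ≤ X * e r := by
    rw [← mul_sub, abs_mul, abs_of_nonneg hX]
    gcongr
    exact abs_prod_one_sub_sub_alternatingSum_le hx₀ hx₁ r
  have last_level := level_error r
  rw [sum_range_succ]
  rw [abs_le] at *
  constructor <;> linarith

end BrunPureSieve

section PeriodicPredicates

open Finset

variable {P Q : ℕ → Prop} [DecidablePred P] [DecidablePred Q]

lemma card_filter_Ico_add_mul_of_periodic {m : ℕ} (hP : Function.Periodic P m) (a q : ℕ) :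
    #{n ∈ Ico a (a + q * m) | P n} = q * m.count P := by
  induction q with
  | zero => simp
  | succ q ih =>
    have Ico_split : Ico a (a + (q + 1) * m) =
        Ico a (a + q * m) ∪ Ico (a + q * m) (a + q * m + m) := by
      rw [Ico_union_Ico_eq_Ico (Nat.le_add_right _ _) (Nat.le_add_right _ _), add_one_mul,
        ← add_assoc]
    rw [Ico_split, filter_union,
      card_union_of_disjoint (disjoint_filter_filter (Ico_disjoint_Ico_consecutive _ _ _)), ih,
      Nat.filter_Ico_card_eq_of_periodic _ _ _ hP, add_one_mul]

theorem abs_card_filter_Icc_floor_sub_le_of_periodic {m : ℕ} (hm : 0 < m)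
    (hP : Function.Periodic P m) {X : ℝ} (hX : 0 ≤ X) :
    |(#{n ∈ Icc 1 ⌊X⌋₊ | P n} : ℝ) - X * (m.count P / m)| ≤ m.count P := by
  have hm' : (0 : ℝ) < m := Nat.cast_pos.2 hm
  set q := ⌊X⌋₊ / m
  have q_mul_le : q * m ≤ ⌊X⌋₊ := Nat.div_mul_le_self _ _
  have lt_succ_q_mul : ⌊X⌋₊ < (q + 1) * m := by
    rw [add_one_mul]
    exact Nat.lt_div_mul_add hm
  have q_le : (q : ℝ) ≤ X / m :=
    (le_div_iff₀ hm').2 (by exact_mod_cast (Nat.le_floor_iff hX).1 q_mul_le)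
  have le_succ_q : X / m ≤ q + 1 :=
    (div_le_iff₀ hm').2 (by exact_mod_cast ((Nat.floor_lt hX).1 lt_succ_q_mul).le)
  have count_le : (q : ℝ) * m.count P ≤ #{n ∈ Icc 1 ⌊X⌋₊ | P n} := by
    rw [← Nat.cast_mul, ← card_filter_Ico_add_mul_of_periodic hP 1 q]
    gcongr
    grind
  have le_count : (#{n ∈ Icc 1 ⌊X⌋₊ | P n} : ℝ) ≤ (q + 1) * m.count P := by
    rw [← Nat.cast_add_one, ← Nat.cast_mul, ← card_filter_Ico_add_mul_of_periodic hP 1 (q + 1)]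
    gcongr
    grind
  have lower := mul_le_mul_of_nonneg_right q_le (m.count P).cast_nonneg
  have upper := mul_le_mul_of_nonneg_right le_succ_q (m.count P).cast_nonneg
  rw [mul_div_left_comm, mul_comm (m.count P : ℝ), abs_le]
  constructor <;> linarith

theorem count_mul_and_of_periodic {a b : ℕ} (hab : a.Coprime b) (hP : Function.Periodic P a)
    (hQ : Function.Periodic Q b) :
    (a * b).count (fun n => P n ∧ Q n) = a.count P * b.count Q := by
  obtain rfl | ha := a.eq_zero_or_pos
  · simp
  obtain rfl | hb := b.eq_zero_or_pos
  · simp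
  simp only [Nat.count_eq_card_filter_range, ← card_product]
  refine card_nbij (fun n => (n % a, n % b)) ?_ ?_ ?_
  · intro n hn
    simp only [mem_coe, mem_filter, mem_range, mem_product, hP.map_mod_nat, hQ.map_mod_nat] at hn ⊢
    exact ⟨⟨Nat.mod_lt _ ha, hn.2.1⟩, ⟨Nat.mod_lt _ hb, hn.2.2⟩⟩
  · intro n hn n' hn' h
    simp only [coe_filter, mem_range, Set.mem_ofPred_eq, Prod.mk.injEq] at hn hn' h
    have modEq : n ≡ n' [MOD a * b] := (Nat.modEq_and_modEq_iff_modEq_mul hab).1 h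
    exact modEq.eq_of_lt_of_lt hn.1 hn'.1
  · rintro ⟨y, z⟩ hyz
    simp only [coe_product, coe_filter, mem_range, Set.mem_prod, Set.mem_ofPred_eq] at hyz
    obtain ⟨⟨hy, hPy⟩, hz, hQz⟩ := hyz
    obtain ⟨n, ⟨hna, hnb⟩, n_lt⟩ : ∃ n, (n ≡ y [MOD a] ∧ n ≡ z [MOD b]) ∧ n < a * b :=
      ⟨_, (Nat.chineseRemainder hab y z).2, Nat.chineseRemainder_lt_mul hab y z ha.ne' hb.ne'⟩
    have n_mod_a : n % a = y := Nat.mod_eq_of_modEq hna hy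
    have n_mod_b : n % b = z := Nat.mod_eq_of_modEq hnb hz
    refine ⟨n, ?_, Prod.ext n_mod_a n_mod_b⟩
    simp only [coe_filter, mem_range, Set.mem_ofPred_eq]
    refine ⟨n_lt, ?_, ?_⟩
    · rwa [← hP.map_mod_nat, n_mod_a]
    · rwa [← hQ.map_mod_nat, n_mod_b]

variable {ι : Type*} {s : Finset ι} {m : ι → ℕ} {B : ι → ℕ → Prop}

lemma periodic_forall_mem_prod (hB : ∀ i ∈ s, Function.Periodic (B i) (m i)) :
    Function.Periodic (fun n => ∀ i ∈ s, B i n) (∏ i ∈ s, m i) := by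
  intro n
  refine propext (forall₂_congr fun i hi => ?_)
  obtain ⟨c, hc⟩ := dvd_prod_of_mem m hi
  rw [hc, mul_comm]
  exact iff_of_eq ((hB i hi).nat_mul c n)

theorem count_prod_forall_mem_of_periodic [∀ i, DecidablePred (B i)]
    (hm : (s : Set ι).Pairwise (Function.onFun Nat.Coprime m))
    (hB : ∀ i ∈ s, Function.Periodic (B i) (m i)) :
    (∏ i ∈ s, m i).count (fun n => ∀ i ∈ s, B i n) = ∏ i ∈ s, (m i).count (B i) := by
  classical
  induction s using Finset.induction_on with
  | empty => simp
  | insert a s ha ih =>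
    rw [coe_insert, Set.pairwise_insert_of_symm_of_notMem (mem_coe.not.2 ha)] at hm
    rw [forall_mem_insert] at hB
    simp only [forall_mem_insert, prod_insert ha]
    rw [count_mul_and_of_periodic (Nat.Coprime.prod_right fun i hi => hm.2 i hi) hB.1
      (periodic_forall_mem_prod hB.2), ih hm.1 hB.2]

theorem abs_card_filter_forall_mem_sub_le_of_periodic [∀ i, DecidablePred (B i)]
    (hm₀ : ∀ i ∈ s, 0 < m i) (hm : (s : Set ι).Pairwise (Function.onFun Nat.Coprime m))
    (hB : ∀ i ∈ s, Function.Periodic (B i) (m i)) {X : ℝ} (hX : 0 ≤ X) :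
    |(#{n ∈ Icc 1 ⌊X⌋₊ | ∀ i ∈ s, B i n} : ℝ) - X * ∏ i ∈ s, ((m i).count (B i) / m i : ℝ)| ≤
      ∏ i ∈ s, ((m i).count (B i) : ℝ) := by
  have h := abs_card_filter_Icc_floor_sub_le_of_periodic (prod_pos hm₀)
    (periodic_forall_mem_prod hB) hX
  rwa [count_prod_forall_mem_of_periodic hm hB, Nat.cast_prod, Nat.cast_prod,
    ← prod_div_distrib] at h

end PeriodicPredicates

section PrimeReciprocals

open Real

lemma sum_one_div_primes_dyadic_le (i : ℕ) :
    ∑ p ∈ Nat.primesBelow (2 ^ (i + 2)) \ Nat.primesBelow (2 ^ (i + 1)), 1 / (p : ℝ) ≤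
      4 * ((i + 1 : ℕ) : ℝ)⁻¹ := by
  set N : ℝ := 2 ^ (i + 1) with hN
  have logN_pos : 0 < log N := log_pos (one_lt_pow₀ one_lt_two (by simp))
  have one_div_le : ∀ p ∈ Nat.primesBelow (2 ^ (i + 2)) \ Nat.primesBelow (2 ^ (i + 1)),
      1 / (p : ℝ) ≤ log p / (N * log N) := by
    intro p hp
    have N_le_p : N ≤ p := by
      have : 2 ^ (i + 1) ≤ p := by grind [Nat.mem_primesBelow]
      rw [hN]
      exact_mod_cast this
    rw [div_le_div_iff₀ (by linarith [show 0 < N by positivity]) (by positivity), one_mul, mul_comm]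
    gcongr
  calc ∑ p ∈ Nat.primesBelow (2 ^ (i + 2)) \ Nat.primesBelow (2 ^ (i + 1)), 1 / (p : ℝ)
      ≤ (∑ p ∈ Nat.primesBelow (2 ^ (i + 2)) \ Nat.primesBelow (2 ^ (i + 1)), log p) /
          (N * log N) := by
        rw [Finset.sum_div]
        exact Finset.sum_le_sum one_div_le
    _ ≤ Chebyshev.theta (2 ^ (i + 2) : ℕ) / (N * log N) := by
        rw [Chebyshev.theta_eq_sum_primesLE_log]
        gcongr
        grind [Nat.mem_primesBelow, Nat.mem_primesLE]
    _ ≤ log 4 * (2 ^ (i + 2) : ℕ) / (N * log N) := by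
        gcongr
        exact Chebyshev.theta_le_log4_mul_x (by positivity)
    _ = 4 * ((i + 1 : ℕ) : ℝ)⁻¹ := by
        rw [hN, log_pow, show (4 : ℝ) = 2 ^ 2 by norm_num, log_pow]
        field_simp
        push_cast
        ring

lemma sum_one_div_primesBelow_two_pow_le (m : ℕ) :
    ∑ p ∈ Nat.primesBelow (2 ^ (m + 1)), 1 / (p : ℝ) ≤ 4 * harmonic m := by
  induction m with
  | zero => simp
  | succ m ih =>
    have subset : Nat.primesBelow (2 ^ (m + 1)) ⊆ Nat.primesBelow (2 ^ (m + 2)) :=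
      Nat.primesBelow_mono (Nat.pow_le_pow_right two_pos (Nat.le_succ _))
    rw [← Finset.sum_sdiff subset, harmonic_succ]
    push_cast
    have := sum_one_div_primes_dyadic_le m
    push_cast at this
    linarith

theorem sum_one_div_primesLE_floor_le {Y : ℝ} (hY : 2 ≤ Y) :
    ∑ p ∈ ⌊Y⌋₊.primesLE, 1 / (p : ℝ) ≤ 4 * (log (log Y) + 2) := by
  have two_le_floor : 2 ≤ ⌊Y⌋₊ := Nat.le_floor hY
  set m := Nat.log 2 ⌊Y⌋₊
  have m_pos : (0 : ℝ) < m := Nat.cast_pos.2 (Nat.log_pos one_lt_two two_le_floor)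
  have two_pow_le : (2 : ℝ) ^ m ≤ Y := by
    have := Nat.pow_log_le_self 2 (show ⌊Y⌋₊ ≠ 0 by omega)
    exact_mod_cast (Nat.le_floor_iff (by linarith)).1 this
  have sum_le : ∑ p ∈ ⌊Y⌋₊.primesLE, 1 / (p : ℝ) ≤ 4 * harmonic m := by
    refine (Finset.sum_le_sum_of_subset_of_nonneg ?_ fun p _ _ => by positivity).trans
      (sum_one_div_primesBelow_two_pow_le m)
    exact Nat.primesBelow_mono (Nat.lt_pow_succ_log_self one_lt_two _)
  have log_m_le : log m + log (log 2) ≤ log (log Y) := by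
    rw [← log_mul m_pos.ne' (log_pos one_lt_two).ne', ← log_pow]
    exact log_le_log (log_pos (one_lt_pow₀ one_lt_two (Nat.cast_pos.1 m_pos).ne'))
      (log_le_log (by positivity) two_pow_le)
  have neg_one_le : -1 ≤ log (log 2) := by
    rw [le_log_iff_exp_le (log_pos one_lt_two)]
    linarith [exp_neg_one_lt_d9, log_two_gt_d9]
  linarith [harmonic_le_one_add_log m]

end PrimeReciprocals

section FundamentalLemma

open Finset Real

variable {X Y κ c : ℝ}

lemma sum_primesLE_le_of_le_div (hY : 2 ≤ Y) (hXY : log Y * log (log Y) ≤ c * log X)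
    (hκ : 0 ≤ κ) {x : ℕ → ℝ} (hx : ∀ p ∈ ⌊Y⌋₊.primesLE, x p ≤ κ / p) :
    ∑ p ∈ ⌊Y⌋₊.primesLE, x p ≤ 4 * κ * (c * (log X / log Y) + 2) := by
  have logY_pos : 0 < log Y := log_pos (by linarith)
  have loglog_le : log (log Y) ≤ c * (log X / log Y) := by
    rwa [← mul_div_assoc, le_div_iff₀' logY_pos]
  calc ∑ p ∈ ⌊Y⌋₊.primesLE, x p
      ≤ ∑ p ∈ ⌊Y⌋₊.primesLE, κ * (1 / p) := by
        simpa only [mul_one_div] using sum_le_sum hx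
    _ ≤ κ * (4 * (log (log Y) + 2)) := by
        rw [← mul_sum]
        gcongr
        exact sum_one_div_primesLE_floor_le hY
    _ ≤ κ * (4 * (c * (log X / log Y) + 2)) := by gcongr
    _ = 4 * κ * (c * (log X / log Y) + 2) := by ring

lemma sum_powersetCard_floor_prod_le (hκ : 1 ≤ κ) (hc : 128 * κ ^ 2 * c ≤ 1) {ι : Type*}
    {s : Finset ι} {x : ι → ℝ} (hx₀ : ∀ i ∈ s, 0 ≤ x i) {u : ℝ} (hu : 0 ≤ u)
    (hx : ∑ i ∈ s, x i ≤ 4 * κ * (c * u + 2)) :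
    ∑ T ∈ powersetCard ⌊u / (4 * κ)⌋₊ s, ∏ i ∈ T, x i ≤ exp (64 * κ + 2) * exp (-(c * u)) := by
  have : 0 < κ := by linarith
  have exp_two_le : exp 2 ≤ 8 := by
    rw [show (2 : ℝ) = 1 + 1 by norm_num, exp_add]
    nlinarith [exp_one_lt_d9, exp_pos 1]
  have lt_floor : u / (4 * κ) < ⌊u / (4 * κ)⌋₊ + 1 := Nat.lt_floor_add_one _
  have density_exponent : 32 * κ * (c * u) ≤ u / (4 * κ) := by
    rw [le_div_iff₀ (by positivity)]
    linarith [mul_le_mul_of_nonneg_right hc hu]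
  have c_le : c ≤ 1 / (4 * κ) := by
    rw [le_div_iff₀ (by positivity)]
    nlinarith
  have decay_exponent : c * u ≤ u / (4 * κ) := by
    simpa only [one_div_mul_eq_div] using mul_le_mul_of_nonneg_right c_le hu
  rw [← exp_add]
  refine (sum_powersetCard_prod_le_exp hx₀ 2 _).trans (exp_le_exp.2 ?_)
  calc exp 2 * ∑ i ∈ s, x i - ⌊u / (4 * κ)⌋₊ * 2
      ≤ 8 * (4 * κ * (c * u + 2)) - (u / (4 * κ) - 1) * 2 := by
        have := sum_nonneg hx₀
        gcongr
        linarith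
    _ ≤ 64 * κ + 2 + -(c * u) := by linarith

lemma sum_primesLE_const_le_exp (hY : 2 ≤ Y) (hκ : 1 ≤ κ) :
    ∑ _ ∈ ⌊Y⌋₊.primesLE, κ ≤ exp (2 * κ * log Y) := by
  have hκ₀ : 0 < κ := by linarith
  have half_le_logY : 1 / 2 ≤ log Y := by linarith [log_two_gt_d9, log_le_log two_pos hY]
  have card_le : (#⌊Y⌋₊.primesLE : ℝ) ≤ Y := by
    have : #⌊Y⌋₊.primesLE ≤ ⌊Y⌋₊ := by
      simpa [Nat.primesLE_eq_filter_Ioc_one] using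
        (card_filter_le (Ioc 1 ⌊Y⌋₊) Nat.Prime).trans (by simp)
    exact (Nat.le_floor_iff (by linarith)).1 this
  calc ∑ _ ∈ ⌊Y⌋₊.primesLE, κ = #⌊Y⌋₊.primesLE * κ := by rw [sum_const, nsmul_eq_mul]
    _ ≤ Y * κ := by gcongr
    _ = exp (log Y + log κ) := by rw [exp_add, exp_log (by linarith), exp_log hκ₀]
    _ ≤ exp (2 * κ * log Y) := exp_le_exp.2 (by nlinarith [log_le_sub_one_of_pos hκ₀])

lemma sum_range_sum_powersetCard_pow_card_le (hX : 1 ≤ X) (hY : 2 ≤ Y) (hκ : 1 ≤ κ)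
    (hc : 4 * c ≤ 1) :
    ∑ d ∈ range (⌊log X / log Y / (4 * κ)⌋₊ + 1), ∑ T ∈ powersetCard d ⌊Y⌋₊.primesLE, κ ^ #T ≤
      exp 1 * (X * exp (-(c * (log X / log Y)))) := by
  set r := ⌊log X / log Y / (4 * κ)⌋₊
  have hκ₀ : 0 < κ := by linarith
  have logX_nonneg : 0 ≤ log X := log_nonneg hX
  have half_le_logY : 1 / 2 ≤ log Y := by linarith [log_two_gt_d9, log_le_log two_pos hY]
  have level_le : r * (2 * κ * log Y) ≤ log X / 2 := by
    have : (r : ℝ) ≤ log X / log Y / (4 * κ) := Nat.floor_le (by positivity)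
    calc r * (2 * κ * log Y) ≤ log X / log Y / (4 * κ) * (2 * κ * log Y) := by gcongr
      _ = log X / 2 := by field_simp; norm_num
  have decay_le : c * (log X / log Y) ≤ log X / 2 := by
    have : log X / log Y ≤ 2 * log X := by
      rw [div_le_iff₀ (by linarith)]
      nlinarith
    nlinarith [show 0 ≤ log X / log Y by positivity]
  simp only [← prod_const]
  refine (sum_range_succ_sum_powersetCard_prod_le (fun _ _ => hκ₀.le)
    (one_le_exp (by positivity)) (sum_primesLE_const_le_exp hY hκ) r).trans ?_
  gcongr
  calc exp (2 * κ * log Y) ^ r = exp (r * (2 * κ * log Y)) := (exp_nat_mul _ _).symm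
    _ ≤ exp (log X + -(c * (log X / log Y))) := exp_le_exp.2 (by linarith)
    _ = X * exp (-(c * (log X / log Y))) := by rw [exp_add, exp_log (by linarith)]

theorem abs_card_filter_forall_primesLE_not_sub_le {α : Type*} {A : Finset α} {B : ℕ → α → Prop}
    [∀ p, DecidablePred (B p)] (hX : 1 ≤ X) (hY : 2 ≤ Y) (hκ : 1 ≤ κ)
    (hc : 128 * κ ^ 2 * c ≤ 1) (hXY : log Y * log (log Y) ≤ c * log X)
    {x : ℕ → ℝ} (hx₀ : ∀ p ∈ ⌊Y⌋₊.primesLE, 0 ≤ x p) (hx₁ : ∀ p ∈ ⌊Y⌋₊.primesLE, x p ≤ 1)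
    (hx : ∀ p ∈ ⌊Y⌋₊.primesLE, x p ≤ κ / p)
    (hB : ∀ T ⊆ ⌊Y⌋₊.primesLE,
      |(#{n ∈ A | ∀ p ∈ T, B p n} : ℝ) - X * ∏ p ∈ T, x p| ≤ κ ^ #T) :
    |(#{n ∈ A | ∀ p ∈ ⌊Y⌋₊.primesLE, ¬ B p n} : ℝ) - X * ∏ p ∈ ⌊Y⌋₊.primesLE, (1 - x p)| ≤
      (2 * exp (64 * κ + 2) + exp 1) * X * exp (-c * log X / log Y) := by
  have hκ₀ : 0 ≤ κ := by linarith
  have u_nonneg : 0 ≤ log X / log Y := div_nonneg (log_nonneg hX) (log_nonneg (by linarith))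
  have tail_le := sum_powersetCard_floor_prod_le hκ hc hx₀ u_nonneg
    (sum_primesLE_le_of_le_div hY hXY hκ₀ hx)
  have remainder_le := sum_range_sum_powersetCard_pow_card_le hX hY hκ (c := c) (by nlinarith)
  rw [neg_mul, neg_div, mul_div_assoc]
  calc |(#{n ∈ A | ∀ p ∈ ⌊Y⌋₊.primesLE, ¬ B p n} : ℝ) - X * ∏ p ∈ ⌊Y⌋₊.primesLE, (1 - x p)|
      ≤ 2 * X * _ + _ := abs_card_filter_forall_not_sub_mul_prod_le (by linarith) hx₀ hx₁ hB _
    _ ≤ 2 * X * (exp (64 * κ + 2) * exp (-(c * (log X / log Y)))) +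
          exp 1 * (X * exp (-(c * (log X / log Y)))) := by gcongr
    _ = (2 * exp (64 * κ + 2) + exp 1) * X * exp (-(c * (log X / log Y))) := by ring

end FundamentalLemma

section PolynomialCongruences

open Finset Polynomial

lemma periodic_dvd_eval (f : ℤ[X]) (q : ℕ) :
    Function.Periodic (fun n : ℕ => (q : ℤ) ∣ f.eval (n : ℤ)) q := by
  intro n
  have dvd_sub : (q : ℤ) ∣ f.eval ((n + q : ℕ) : ℤ) - f.eval (n : ℤ) := by
    simpa using sub_dvd_eval_sub ((n + q : ℕ) : ℤ) n f
  exact propext (dvd_iff_dvd_of_dvd_sub dvd_sub)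

theorem count_prime_dvd_eval_le_natDegree {f : ℤ[X]} {p : ℕ} [Fact p.Prime]
    (hf : ¬ ∀ n : ℤ, (p : ℤ) ∣ f.eval n) :
    p.count (fun n : ℕ => (p : ℤ) ∣ f.eval (n : ℤ)) ≤ f.natDegree := by
  set fp := f.map (Int.castRingHom (ZMod p))
  have dvd_iff (n : ℤ) : (p : ℤ) ∣ f.eval n ↔ fp.eval (n : ZMod p) = 0 := by
    rw [← ZMod.intCast_zmod_eq_zero_iff_dvd, ← eq_intCast (Int.castRingHom (ZMod p)),
      ← eq_intCast (Int.castRingHom (ZMod p)), eval_map_apply]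
  have fp_ne_zero : fp ≠ 0 := fun h => hf fun n => by rw [dvd_iff, h, eval_zero]
  rw [Nat.count_eq_card_filter_range]
  calc #((range p).filter fun n : ℕ => (p : ℤ) ∣ f.eval (n : ℤ))
      ≤ #fp.roots.toFinset := by
        refine card_le_card_of_injOn (fun n : ℕ => (n : ZMod p)) (fun n hn => ?_) ?_
        · have root := (dvd_iff n).1 (mem_filter.1 hn).2
          simpa [fp_ne_zero] using root
        · intro a ha b hb hab
          simp only [coe_filter, mem_range, Set.mem_ofPred_eq] at ha hb
          exact ((ZMod.natCast_eq_natCast_iff a b p).1 hab).eq_of_lt_of_lt ha.1 hb.1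
    _ ≤ fp.natDegree := (Multiset.toFinset_card_le _).trans (card_roots' fp)
    _ ≤ f.natDegree := natDegree_map_le

/-- `M` bounds the fixed divisors of `f`, that is, the moduli `q` at which `f` vanishes identically
as a function on `ℤ` (not necessarily coefficientwise). -/
def FixedDivisorsLE (f : ℤ[X]) (M : ℕ) : Prop :=
  ∀ q : ℕ, (∀ n : ℤ, (q : ℤ) ∣ f.eval n) → q ≤ M

end PolynomialCongruences

section LocalDensities

open Finset Polynomial

variable {g : ℤ[X]} {p M : ℕ}

lemma forall_dvd_eval_derivative_of_lt_gammaExp {c : ℕ} (hc₀ : 0 < c) (hc : c < gammaExp g p)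
    (n : ℤ) : (p : ℤ) ^ c ∣ (derivative g).eval n := by
  by_contra h
  exact Nat.notMem_of_lt_sInf hc ⟨hc₀, fun H => h (H n)⟩

lemma gammaExp_spec_s8 (hp : p.Prime) (hM : FixedDivisorsLE (derivative g) M) :
    0 < gammaExp g p ∧ ¬ ∀ n : ℤ, (p : ℤ) ^ gammaExp g p ∣ (derivative g).eval n := by
  refine Nat.sInf_mem (s := {c | 0 < c ∧ ¬ ∀ n : ℤ, (p : ℤ) ^ c ∣ (derivative g).eval n})
    ⟨M + 1, M.succ_pos, fun h => ?_⟩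
  have le_M : p ^ (M + 1) ≤ M := hM _ (by exact_mod_cast h)
  exact absurd (Nat.lt_pow_self (n := M + 1) hp.one_lt) (by omega)

lemma gammaExp_eq_one_or_pow_gammaExp_le (hp : p.Prime) (hM : FixedDivisorsLE (derivative g) M) :
    gammaExp g p = 1 ∨ p ^ gammaExp g p ≤ M ^ 2 := by
  obtain ⟨γ_pos, -⟩ := gammaExp_spec_s8 hp hM
  obtain ⟨b, hb⟩ : ∃ b, gammaExp g p = b + 1 := ⟨_, (Nat.succ_pred_eq_of_pos γ_pos).symm⟩
  obtain rfl | b_pos := b.eq_zero_or_pos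
  · exact Or.inl hb
  right
  have le_M : p ^ b ≤ M := hM _ fun n => by
    exact_mod_cast forall_dvd_eval_derivative_of_lt_gammaExp b_pos (by omega) n
  calc p ^ gammaExp g p ≤ p ^ (b * 2) := Nat.pow_le_pow_right hp.pos (by omega)
    _ = (p ^ b) ^ 2 := pow_mul _ _ _
    _ ≤ M ^ 2 := Nat.pow_le_pow_left le_M 2

lemma jCount_eq_count (g : ℤ[X]) (p : ℕ) :
    jCount g p = (p ^ gammaExp g p).count
      (fun n : ℕ => ((p ^ gammaExp g p : ℕ) : ℤ) ∣ (derivative g).eval (n : ℤ)) := by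
  classical
  rw [Nat.count_eq_card_filter_range, jCount,
    ← card_image_of_injective _ (Nat.cast_injective (R := ℤ))]
  congr 1
  ext n
  simp only [mem_filter, bind_def, pure_def, mem_sup, mem_singleton, mem_image, Nat.cast_pow]
  grind

theorem jCount_le (hp : p.Prime) (hM : FixedDivisorsLE (derivative g) M) :
    jCount g p ≤ g.natDegree + M ^ 2 := by
  have : Fact p.Prime := ⟨hp⟩
  rw [jCount_eq_count]
  rcases gammaExp_eq_one_or_pow_gammaExp_le hp hM with γ_eq_one | pow_le
  · have not_forall := (gammaExp_spec_s8 hp hM).2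
    simp only [γ_eq_one, pow_one] at not_forall ⊢
    calc _ ≤ (derivative g).natDegree := count_prime_dvd_eval_le_natDegree not_forall
      _ ≤ g.natDegree + M ^ 2 := by have := natDegree_derivative_le g; omega
  · exact (Nat.count_le ..).trans (pow_le.trans (Nat.le_add_left _ _))

theorem jCount_div_le (hp : p.Prime) (hM : FixedDivisorsLE (derivative g) M) :
    (jCount g p : ℝ) / (p : ℝ) ^ gammaExp g p ≤ (g.natDegree + M ^ 2 : ℕ) / p := by
  have p_pos : (0 : ℝ) < p := Nat.cast_pos.2 hp.pos
  gcongr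
  · exact jCount_le hp hM
  · exact_mod_cast Nat.le_self_pow (gammaExp_spec_s8 hp hM).1.ne' p

lemma jCount_div_le_one (g : ℤ[X]) (p : ℕ) : (jCount g p : ℝ) / (p : ℝ) ^ gammaExp g p ≤ 1 := by
  refine div_le_one_of_le₀ ?_ (by positivity)
  rw [jCount_eq_count]
  exact_mod_cast Nat.count_le ..

lemma wProd_eq_prod_primesLE (g : ℤ[X]) (Y : ℝ) :
    wProd g Y = ∏ p ∈ ⌊Y⌋₊.primesLE, (1 - (jCount g p : ℝ) / (p : ℝ) ^ gammaExp g p) := by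
  rw [wProd, Nat.primesLE_eq_filter_range]

lemma ncard_Icc_inter_WSet (g : ℤ[X]) (N : ℕ) {Y : ℝ} (hY : 0 ≤ Y) :
    (Set.Icc (1 : ℤ) N ∩ WSet g Y).ncard = #((Icc 1 N).filter fun n : ℕ =>
      ∀ p ∈ ⌊Y⌋₊.primesLE, ¬ ((p ^ gammaExp g p : ℕ) : ℤ) ∣ (derivative g).eval (n : ℤ)) := by
  rw [← card_image_of_injective _ (Nat.cast_injective (R := ℤ)), ← Set.ncard_coe_finset]
  congr 1
  ext n
  simp only [Set.mem_inter_iff, Set.mem_Icc, WSet, Set.mem_ofPred_eq, coe_image, coe_filter,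
    Set.mem_image, mem_Icc, Nat.mem_primesLE, Nat.le_floor_iff hY, Nat.cast_pow]
  constructor
  · rintro ⟨⟨one_le, le_N⟩, not_dvd⟩
    lift n to ℕ using by omega
    exact ⟨n, ⟨by omega, fun p hp => not_dvd p hp.2 hp.1⟩, rfl⟩
  · rintro ⟨n, ⟨hn, not_dvd⟩, rfl⟩
    exact ⟨by omega, fun p hp hpY => not_dvd p ⟨hpY, hp⟩⟩

theorem abs_card_filter_forall_dvd_eval_derivative_sub_le
    (hM : FixedDivisorsLE (derivative g) M) {T : Finset ℕ}
    (hT : ∀ p ∈ T, p.Prime) {X : ℝ} (hX : 0 ≤ X) :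
    |(#((Icc 1 ⌊X⌋₊).filter fun n : ℕ =>
          ∀ p ∈ T, ((p ^ gammaExp g p : ℕ) : ℤ) ∣ (derivative g).eval (n : ℤ)) : ℝ) -
        X * ∏ p ∈ T, ((jCount g p : ℝ) / (p : ℝ) ^ gammaExp g p)| ≤
      ((g.natDegree + M ^ 2 : ℕ) : ℝ) ^ #T := by
  have coprime : (T : Set ℕ).Pairwise (Function.onFun Nat.Coprime fun p => p ^ gammaExp g p) :=
    fun p hp q hq hpq => Nat.Coprime.pow _ _ ((Nat.coprime_primes (hT p hp) (hT q hq)).2 hpq)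
  have h := abs_card_filter_forall_mem_sub_le_of_periodic
    (fun p hp => pow_pos (hT p hp).pos (gammaExp g p)) coprime
    (fun p _ => periodic_dvd_eval (derivative g) (p ^ gammaExp g p)) hX
  simp only [← jCount_eq_count] at h
  simp only [Nat.cast_pow] at h ⊢
  refine h.trans ?_
  exact_mod_cast prod_le_pow_card _ _ _ fun p hp => jCount_le (hT p hp) hM

end LocalDensities

/-- The Brun-sieve count (Lemma 3.6 / Rice, Proposition 2.4): for `g` of degree `k` whose
derivative vanishes identically only modulo moduli from the finite set `S`, and `X, Y ≥ 2`
with `c·log X ≥ log Y · log log Y`,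
`#({1,…,⌊X⌋} ∩ W(g;Y)) = X·∏_{p ≤ Y}(1 - j(g;p)/p^{γ(g;p)}) + O(X·e^{-c·log X/log Y})`. -/
theorem stmt8 (k : ℕ) (hk : 0 < k) (S : Finset ℤ) (hS : ∀ s ∈ S, 2 ≤ s) :
    ∃ c C : ℝ, 0 < c ∧ 0 < C ∧
      ∀ g : Polynomial ℤ, g.natDegree = k → Polynomial.derivative g ≠ 0 →
        (∀ q : ℤ, 2 ≤ q → (∀ n : ℤ, q ∣ (Polynomial.derivative g).eval n) → q ∈ S) →
        ∀ X Y : ℝ, 2 ≤ X → 2 ≤ Y → c * Real.log X ≥ Real.log Y * Real.log (Real.log Y) →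
          |(((Set.Icc (1 : ℤ) (⌊X⌋₊ : ℤ) ∩ WSet g Y).ncard : ℝ) - X * wProd g Y)| ≤
            C * X * Real.exp (-c * Real.log X / Real.log Y) := by
  obtain ⟨M, hM⟩ : ∃ M : ℕ, ∀ s ∈ S, s ≤ (M : ℤ) :=
    ⟨S.sup Int.natAbs, fun s hs => by have := Finset.le_sup (f := Int.natAbs) hs; omega⟩
  set κ : ℝ := ((k + (M + 1) ^ 2 : ℕ) : ℝ) with hκ
  have one_le_κ : 1 ≤ κ := Nat.one_le_cast.2 (by omega)
  refine ⟨1 / (128 * κ ^ 2), 2 * Real.exp (64 * κ + 2) + Real.exp 1, by positivity, by positivity,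
    fun g hg _ hgS X Y hX hY hXY => ?_⟩
  have fixedDivisors : FixedDivisorsLE (Polynomial.derivative g) (M + 1) := fun q hq => by
    by_contra! hlt
    have := hM q (hgS q (by omega) hq)
    omega
  have prime_of_mem {p : ℕ} (hp : p ∈ ⌊Y⌋₊.primesLE) : p.Prime := (Nat.mem_primesLE.1 hp).2
  rw [ncard_Icc_inter_WSet g _ (by linarith), wProd_eq_prod_primesLE]
  refine abs_card_filter_forall_primesLE_not_sub_le (by linarith) hY one_le_κ
    (mul_one_div_cancel (by positivity)).le hXY (fun p _ => by positivity)
    (fun p _ => jCount_div_le_one g p) (fun p hp => ?_) (fun T hT => ?_)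
  · rw [hκ, ← hg]
    exact jCount_div_le (prime_of_mem hp) fixedDivisors
  · rw [hκ, ← hg]
    exact abs_card_filter_forall_dvd_eval_derivative_sub_le fixedDivisors
      (fun p hp => prime_of_mem (hT hp)) (by linarith)
end
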